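/- Let (ε_n)_{n≥1} be positive reals with Σ_n ε_n < ∞, let (y_n)_{n≥1} be a normalized block sequence of (e_i), and let (k_n)_{n≥0} be a strictly increasing sequence in ℕ such that for every n ≥ 1: (1) sup{ Σ_{i=1}^k ‖E_i(y_n)‖ : 1 ≤ k ≤ k_{n−1}, E₁ < ⋯ < E_k finite subsets of ℕ } ≤ 1 + ε_n, and (2) max supp(y_n) ≤ ε_n · f(k_n/3). Then (y_n) is equivalent to (e_n): there is C ≥ 1 such that (1/C)‖Σ α_i e_i‖ ≤ ‖Σ α_i y_i‖ ≤ C‖Σ α_i e_i‖ for all finitely supported real scalars (α_i). -/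

import Mathlib

abbrev c00 : Type := ℕ →₀ ℝ

noncomputable def flog (x : ℝ) : ℝ := Real.logb 2 (x + 1)

noncomputable def supNorm (x : c00) : ℝ := ⨆ i, |x i|

def proj (E : Finset ℕ) (x : c00) : c00 := x.filter (· ∈ E)

def FLt (A B : Finset ℕ) : Prop := ∀ a ∈ A, ∀ b ∈ B, a < b

def IsNormC00 (N : c00 → ℝ) : Prop :=
  (∀ x, N x = 0 ↔ x = 0) ∧ (∀ x y, N (x + y) ≤ N x + N y) ∧
    ∀ (a : ℝ) (x : c00), N (a • x) = |a| * N x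

def schSet (N : c00 → ℝ) (x : c00) : Set ℝ :=
  {s | ∃ n : ℕ, 2 ≤ n ∧ ∃ E : Fin n → Finset ℕ,
    (∀ i j : Fin n, i < j → FLt (E i) (E j)) ∧
    s = (flog n)⁻¹ * ∑ i, N (proj (E i) x)}

def IsSchlumprechtNorm (N : c00 → ℝ) : Prop :=
  IsNormC00 N ∧ ∀ x : c00, IsLUB (insert (supNorm x) (schSet N x)) (N x)

def IsBlockSeq (x : ℕ → c00) : Prop :=
  (∀ n, x n ≠ 0) ∧ ∀ n, ∀ i ∈ (x n).support, ∀ j ∈ (x (n+1)).support, i < j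

def SeqEquiv (N : c00 → ℝ) (u v : ℕ → c00) : Prop :=
  ∃ c : ℝ, 1 ≤ c ∧ ∀ a : ℕ →₀ ℝ,
    (1 / c) * N (a.sum fun i t => t • u i) ≤ N (a.sum fun i t => t • v i) ∧
    N (a.sum fun i t => t • v i) ≤ c * N (a.sum fun i t => t • u i)


namespace Sch

lemma proj_apply (E : Finset ℕ) (x : c00) (i : ℕ) :
    proj E x i = if i ∈ E then x i else 0 := by
  simp [proj, Finsupp.filter_apply]

lemma proj_proj (A B : Finset ℕ) (x : c00) : proj A (proj B x) = proj (A ∩ B) x := by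
  ext i
  simp only [proj_apply, Finset.mem_inter]
  by_cases h : i ∈ A <;> by_cases h' : i ∈ B <;> simp [h, h']

lemma proj_proj_of_subset {A B : Finset ℕ} (h : A ⊆ B) (x : c00) :
    proj A (proj B x) = proj A x := by
  rw [proj_proj, Finset.inter_eq_left.2 h]

lemma proj_add (E : Finset ℕ) (x z : c00) : proj E (x + z) = proj E x + proj E z := by
  ext i
  simp only [proj_apply, Finsupp.add_apply]
  split_ifs <;> simp

lemma proj_smul (E : Finset ℕ) (a : ℝ) (x : c00) : proj E (a • x) = a • proj E x := by
  ext i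
  simp only [proj_apply, Finsupp.smul_apply]
  split_ifs <;> simp

lemma proj_zero (E : Finset ℕ) : proj E 0 = 0 := by
  ext i
  simp [proj_apply]

lemma proj_empty (x : c00) : proj ∅ x = 0 := by
  ext i
  simp [proj_apply]

lemma proj_sum {ι : Type*} (s : Finset ι) (E : Finset ℕ) (x : ι → c00) :
    proj E (∑ i ∈ s, x i) = ∑ i ∈ s, proj E (x i) := by
  classical
  induction s using Finset.induction_on with
  | empty => simp [proj_zero]
  | insert a s ha ih => rw [Finset.sum_insert ha, Finset.sum_insert ha, proj_add, ih]

lemma mem_support_proj {E : Finset ℕ} {x : c00} {i : ℕ} :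
    i ∈ (proj E x).support ↔ i ∈ E ∧ i ∈ x.support := by
  simp [proj_apply]

lemma proj_eq_self {E : Finset ℕ} {x : c00} (h : x.support ⊆ E) : proj E x = x := by
  ext i
  rw [proj_apply]
  split_ifs with hi
  · rfl
  · by_contra hne
    exact hi (h (Finsupp.mem_support_iff.2 (Ne.symm hne)))

lemma proj_eq_zero {E : Finset ℕ} {x : c00} (h : ∀ i ∈ x.support, i ∉ E) : proj E x = 0 := by
  ext i
  rw [proj_apply]
  split_ifs with hi
  · by_contra hne
    exact h i (Finsupp.mem_support_iff.2 hne) hi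
  · rfl

lemma FLt.mono {A B A' B' : Finset ℕ} (h : FLt A B) (hA : A' ⊆ A) (hB : B' ⊆ B) : FLt A' B' :=
  fun a ha b hb => h a (hA ha) b (hB hb)

lemma flog_mono {a b : ℝ} (ha : 0 ≤ a) (h : a ≤ b) : flog a ≤ flog b := by
  unfold flog
  exact Real.logb_le_logb_of_le (by norm_num) (by linarith) (by linarith)

lemma flog_one : flog 1 = 1 := by
  unfold flog
  norm_num

lemma flog_zero : flog 0 = 0 := by
  unfold flog
  norm_num

lemma flog_two : (3/2 : ℝ) ≤ flog 2 := by
  unfold flog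
  rw [Real.le_logb_iff_rpow_le (by norm_num) (by norm_num)]
  rw [show (2:ℝ) ^ (3/2 : ℝ) = Real.sqrt 8 by
    rw [Real.sqrt_eq_rpow, show (8:ℝ) = 2 ^ (3:ℝ) by norm_num, ← Real.rpow_mul (by norm_num)]
    norm_num]
  rw [Real.sqrt_le_left (by norm_num)]
  norm_num

lemma flog_ge {n : ℕ} (hn : 2 ≤ n) : (3/2 : ℝ) ≤ flog n :=
  flog_two.trans (flog_mono (by norm_num) (by exact_mod_cast hn))

lemma flog_pos {a : ℝ} (ha : 0 < a) : 0 < flog a := by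
  unfold flog
  exact Real.logb_pos (by norm_num) (by linarith)

lemma flog_nonneg {a : ℝ} (ha : 0 ≤ a) : 0 ≤ flog a := by
  unfold flog
  exact Real.logb_nonneg (by norm_num) (by linarith)

section basic


lemma N_zero {N : c00 → ℝ} (hN : IsSchlumprechtNorm N) : N 0 = 0 := (hN.1.1 0).2 rfl

lemma N_add {N : c00 → ℝ} (hN : IsSchlumprechtNorm N) (x z : c00) : N (x + z) ≤ N x + N z := hN.1.2.1 x z

lemma N_smul {N : c00 → ℝ} (hN : IsSchlumprechtNorm N) (a : ℝ) (x : c00) : N (a • x) = |a| * N x := hN.1.2.2 a x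

lemma N_nonneg {N : c00 → ℝ} (hN : IsSchlumprechtNorm N) (x : c00) : 0 ≤ N x := by
  have h := N_add hN x ((-1 : ℝ) • x)
  rw [N_smul hN] at h
  have : x + (-1 : ℝ) • x = 0 := by simp
  rw [this, N_zero hN] at h
  norm_num at h
  linarith

lemma N_sum {N : c00 → ℝ} (hN : IsSchlumprechtNorm N) {ι : Type*} (s : Finset ι) (x : ι → c00) :
    N (∑ i ∈ s, x i) ≤ ∑ i ∈ s, N (x i) := by
  classical
  induction s using Finset.induction_on with
  | empty => simp [N_zero hN]
  | insert a s ha ih =>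
    rw [Finset.sum_insert ha, Finset.sum_insert ha]
    exact (N_add hN _ _).trans (by linarith)

lemma bdd_coord (x : c00) : BddAbove (Set.range fun i => |x i|) := by
  refine ⟨∑ i ∈ x.support, |x i|, ?_⟩
  rintro _ ⟨i, rfl⟩
  by_cases h : i ∈ x.support
  · exact Finset.single_le_sum (f := fun i => |x i|) (fun _ _ => abs_nonneg _) h
  · rw [Finsupp.notMem_support_iff] at h
    simp only [h, abs_zero]
    exact Finset.sum_nonneg fun _ _ => abs_nonneg _

lemma coord_le {N : c00 → ℝ} (hN : IsSchlumprechtNorm N) (x : c00) (i : ℕ) : |x i| ≤ N x :=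
  (le_ciSup (bdd_coord x) i).trans ((hN.2 x).1 (Set.mem_insert _ _))

lemma sch_le {N : c00 → ℝ} (hN : IsSchlumprechtNorm N) (x : c00) {n : ℕ} (hn : 2 ≤ n) (E : Fin n → Finset ℕ)
    (hE : ∀ i j : Fin n, i < j → FLt (E i) (E j)) :
    ∑ i, N (proj (E i) x) ≤ flog n * N x := by
  have h : (flog n)⁻¹ * ∑ i, N (proj (E i) x) ≤ N x :=
    (hN.2 x).1 (Set.mem_insert_of_mem _ ⟨n, hn, E, hE, rfl⟩)
  have hp : 0 < flog n := by linarith [flog_ge hn]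
  rwa [inv_mul_le_iff₀ hp] at h

/-- approximate attainment -/
lemma split0 {N : c00 → ℝ} (hN : IsSchlumprechtNorm N) {x : c00} {t : ℝ} (ht0 : 0 ≤ t) (ht : t < N x) :
    (∃ i, t < |x i|) ∨ ∃ n : ℕ, 2 ≤ n ∧ ∃ E : Fin n → Finset ℕ,
      (∀ i j : Fin n, i < j → FLt (E i) (E j)) ∧
      t * flog n < ∑ i, N (proj (E i) x) ∧
      N x * flog n < flog 2 * ∑ i, N (proj (E i) x) := by
  have h2 := flog_two
  have hx : 0 < N x := by linarith
  have h2' : N x / flog 2 < N x := by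
    rw [div_lt_iff₀ (by linarith)]
    nlinarith
  obtain ⟨s, hs, hts⟩ := (lt_isLUB_iff (hN.2 x)).1 (max_lt ht h2')
  rcases hs with rfl | ⟨n, hn, E, hE, rfl⟩
  · left
    exact exists_lt_of_lt_ciSup ((le_max_left _ _).trans_lt hts)
  · right
    have hp : 0 < flog n := by linarith [flog_ge hn]
    have a1 := (le_max_left _ _).trans_lt hts
    have a2 := (le_max_right _ _).trans_lt hts
    refine ⟨n, hn, E, hE, ?_, ?_⟩
    · rw [lt_inv_mul_iff₀ hp] at a1
      linarith
    · rw [div_lt_iff₀ (by linarith), mul_assoc, lt_inv_mul_iff₀ hp] at a2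
      linarith

lemma small_of {N : c00 → ℝ} (hN : IsSchlumprechtNorm N) {x : c00} {n : ℕ} (hn : 2 ≤ n) (E : Fin n → Finset ℕ)
    (hE : ∀ i j : Fin n, i < j → FLt (E i) (E j))
    (h : N x * flog n < flog 2 * ∑ i, N (proj (E i) x)) (j : Fin n) :
    (proj (E j) x).support.card < x.support.card := by
  by_contra hc
  push Not at hc
  have hsub : (proj (E j) x).support ⊆ x.support := fun i hi => (mem_support_proj.1 hi).2
  have heq := Finset.eq_of_subset_of_card_le hsub hc
  have hsupp : x.support ⊆ E j := fun i hi => by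
    rw [← heq] at hi
    exact (mem_support_proj.1 hi).1
  have hz : ∀ i, i ≠ j → proj (E i) x = 0 := by
    intro i hij
    apply proj_eq_zero
    intro a ha hai
    rcases lt_or_gt_of_ne hij with hl | hl
    · exact lt_irrefl _ (hE i j hl a hai a (hsupp ha))
    · exact lt_irrefl _ (hE j i hl a (hsupp ha) a hai)
  have hsum : ∑ i, N (proj (E i) x) = N x := by
    rw [Finset.sum_eq_single j]
    · rw [proj_eq_self hsupp]
    · intro i _ hi
      rw [hz i hi, N_zero hN]
    · simp
  rw [hsum] at h
  have : flog 2 ≤ flog n := flog_mono (by norm_num) (by exact_mod_cast hn)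
  nlinarith [N_nonneg hN x]

lemma le_of_split {N : c00 → ℝ} (hN : IsSchlumprechtNorm N) {x : c00} {B : ℝ} (hB : 0 ≤ B) (h1 : ∀ i, |x i| ≤ B)
    (h2 : ∀ n : ℕ, 2 ≤ n → ∀ E : Fin n → Finset ℕ,
      (∀ i j : Fin n, i < j → FLt (E i) (E j)) →
      (∀ j, (proj (E j) x).support.card < x.support.card) →
      ∑ i, N (proj (E i) x) ≤ flog n * B) : N x ≤ B := by
  by_contra hlt
  push Not at hlt
  rcases split0 hN hB hlt with ⟨i, hi⟩ | ⟨n, hn, E, hE, hs, hs2⟩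
  · exact absurd (h1 i) (not_le.2 hi)
  · have := h2 n hn E hE (small_of hN hn E hE hs2)
    linarith

lemma N_proj_le {N : c00 → ℝ} (hN : IsSchlumprechtNorm N) (E : Finset ℕ) (x : c00) : N (proj E x) ≤ N x := by
  suffices H : ∀ m : ℕ, ∀ x : c00, (proj E x).support.card < m → N (proj E x) ≤ N x from
    H _ x (Nat.lt_succ_self _)
  intro m
  induction m with
  | zero => intro x hx; omega
  | succ m ih =>
    intro x hx
    refine le_of_split hN (N_nonneg hN x) ?_ ?_
    · intro i
      rw [proj_apply]
      split_ifs
      · exact coord_le hN x i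
      · simpa using N_nonneg hN x
    · intro n hn F hF hc
      refine le_trans (Finset.sum_le_sum fun j _ => ?_) (sch_le hN x hn F hF)
      have hcomm : proj (F j) (proj E x) = proj E (proj (F j) x) := by
        rw [proj_proj, proj_proj, Finset.inter_comm]
      rw [hcomm]
      apply ih
      rw [← hcomm]
      have := hc j
      omega

lemma N_proj_mono {N : c00 → ℝ} (hN : IsSchlumprechtNorm N) {A B : Finset ℕ} (h : A ⊆ B) (x : c00) : N (proj A x) ≤ N (proj B x) := by
  rw [← proj_proj_of_subset h]
  exact N_proj_le hN _ _

lemma N_single {N : c00 → ℝ} (hN : IsSchlumprechtNorm N) (i : ℕ) (a : ℝ) : N (Finsupp.single i a) = |a| := by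
  apply le_antisymm
  · refine le_of_split hN (abs_nonneg a) ?_ ?_
    · intro j
      rw [Finsupp.single_apply]
      split_ifs <;> simp
    · intro n hn E hE hc
      have h0 : ∀ j, proj (E j) (Finsupp.single i a) = 0 := by
        intro j
        have h1 := hc j
        have h2 : (Finsupp.single i a : c00).support.card ≤ 1 :=
          (Finset.card_le_card Finsupp.support_single_subset).trans (by simp)
        have h3 : (proj (E j) (Finsupp.single i a)).support.card = 0 := by omega
        simpa using h3
      simp only [h0, N_zero hN, Finset.sum_const_zero]
      have := flog_ge hn
      have := abs_nonneg a
      positivity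
  · simpa using coord_le hN (Finsupp.single i a) i

lemma N_proj_singleton {N : c00 → ℝ} (hN : IsSchlumprechtNorm N) (i : ℕ) (x : c00) : N (proj {i} x) = |x i| := by
  have : proj {i} x = Finsupp.single i (x i) := by
    ext j
    rw [proj_apply, Finsupp.single_apply]
    by_cases h : i = j
    · subst h; simp
    · simp [h, Ne.symm h]
  rw [this, N_single hN]

lemma dom {N : c00 → ℝ} (hN : IsSchlumprechtNorm N) (G : ℕ → Finset ℕ) (hG : ∀ i j, i < j → FLt (G i) (G j)) (x z : c00)
    (h : ∀ i, |x i| ≤ N (proj (G i) z)) : N x ≤ N z := by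
  suffices H : ∀ m : ℕ, ∀ x z : c00, x.support.card < m →
      (∀ i, |x i| ≤ N (proj (G i) z)) → N x ≤ N z from
    H _ x z (Nat.lt_succ_self _) h
  intro m
  induction m with
  | zero => intro x z hx; omega
  | succ m ih =>
    intro x z hx h
    refine le_of_split hN (N_nonneg hN z) ?_ ?_
    · intro i
      exact (h i).trans (N_proj_le hN _ _)
    · intro n hn F hF hc
      refine le_trans (Finset.sum_le_sum fun j _ => ?_)
        (sch_le hN z hn (fun j => (F j).biUnion G) ?_)
      · apply ih
        · have := hc j
          omega
        · intro i
          rw [proj_apply]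
          split_ifs with hi
          · rw [proj_proj_of_subset (Finset.subset_biUnion_of_mem G hi)]
            exact h i
          · simpa using N_nonneg hN _
      · intro i j hij a ha b hb
        simp only [Finset.mem_biUnion] at ha hb
        obtain ⟨p, hp, hap⟩ := ha
        obtain ⟨q, hq, hbq⟩ := hb
        exact hG p q (hF i j hij p hp q hq) a hap b hbq

lemma hull (E : Finset ℕ) : ∃ a b : ℕ, E ⊆ Finset.Ico a b ∧
    ∀ p ∈ Finset.Ico a b, (∃ q ∈ E, q ≤ p) ∧ ∃ q ∈ E, p ≤ q := by
  rcases E.eq_empty_or_nonempty with rfl | hne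
  · exact ⟨0, 0, by simp, by simp⟩
  · refine ⟨E.min' hne, E.max' hne + 1, ?_, ?_⟩
    · intro p hp
      rw [Finset.mem_Ico]
      exact ⟨E.min'_le p hp, Nat.lt_succ_of_le (E.le_max' p hp)⟩
    · intro p hp
      rw [Finset.mem_Ico] at hp
      exact ⟨⟨_, E.min'_mem hne, hp.1⟩, ⟨_, E.max'_mem hne, by omega⟩⟩

/-- approximate attainment with intervals -/
lemma split_interval {N : c00 → ℝ} (hN : IsSchlumprechtNorm N) {x : c00} {t : ℝ} (ht0 : 0 ≤ t) (ht : t < N x) :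
    (∃ i, t < |x i|) ∨ ∃ n : ℕ, 2 ≤ n ∧ ∃ a b : Fin n → ℕ,
      (∀ i j : Fin n, i < j → FLt (Finset.Ico (a i) (b i)) (Finset.Ico (a j) (b j))) ∧
      (∀ j, (proj (Finset.Ico (a j) (b j)) x).support.card < x.support.card) ∧
      t * flog n < ∑ i, N (proj (Finset.Ico (a i) (b i)) x) := by
  rcases split0 hN ht0 ht with h | ⟨n, hn, E, hE, hs, hs2⟩
  · exact Or.inl h
  · right
    choose a b hsub hhull using fun j => hull (E j)
    have hle : ∑ i, N (proj (E i) x) ≤ ∑ i, N (proj (Finset.Ico (a i) (b i)) x) :=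
      Finset.sum_le_sum fun j _ => N_proj_mono hN (hsub j) x
    have hF : ∀ i j : Fin n, i < j → FLt (Finset.Ico (a i) (b i)) (Finset.Ico (a j) (b j)) := by
      intro i j hij p hp q hq
      obtain ⟨p', hp', hpp⟩ := (hhull i p hp).2
      obtain ⟨q', hq', hqq⟩ := (hhull j q hq).1
      exact (hpp.trans_lt (hE i j hij p' hp' q' hq')).trans_le hqq
    refine ⟨n, hn, a, b, hF, ?_, hs.trans_le hle⟩
    apply small_of hN hn _ hF
    have := flog_two
    nlinarith

end basic

end Sch
namespace Sch

/-- values of trees with doubled leaves; the items are (set, value, size) -/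
inductive V (N : c00 → ℝ) (x : c00) : Finset ℕ → ℝ → ℕ → Prop
  | leaf (A B E : Finset ℕ) : FLt A B → A ⊆ E → B ⊆ E →
      V N x E (N (proj A x) + N (proj B x)) 1
  | node (l : List (Finset ℕ × ℝ × ℕ)) (E : Finset ℕ) : 2 ≤ l.length →
      l.Pairwise (fun p q => FLt p.1 q.1) → (∀ p ∈ l, V N x p.1 p.2.1 p.2.2) →
      (∀ p ∈ l, p.1 ⊆ E) →
      V N x E ((flog l.length)⁻¹ * (l.map fun p => p.2.1).sum) (1 + (l.map fun p => p.2.2).sum)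

section doubling


lemma sch_list {N : c00 → ℝ} (hN : IsSchlumprechtNorm N) (x : c00) (B : Finset ℕ) (l : List (Finset ℕ))
    (hl : l.Pairwise FLt) (hB : ∀ p ∈ l, p ⊆ B) :
    (l.map fun p => N (proj p x)).sum ≤ flog l.length * N (proj B x) := by
  match l, hl, hB with
  | [], _, _ => simp [flog_zero]
  | [a], _, hB =>
    simp only [List.map_cons, List.map_nil, List.sum_cons, List.sum_nil, add_zero,
      List.length_singleton, Nat.cast_one, flog_one, one_mul]
    exact N_proj_mono hN (hB a (by simp)) x
  | a :: b :: l, hl, hB =>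
    have h := sch_le hN (proj B x) (n := (a :: b :: l).length) (by simp)
      (fun i => (a :: b :: l).get i) (fun i j hij => List.pairwise_iff_get.1 hl i j hij)
    refine le_trans (le_of_eq ?_) h
    have e : ∀ i, proj ((a :: b :: l).get i) (proj B x) = proj ((a :: b :: l).get i) x :=
      fun i => proj_proj_of_subset (hB _ (List.get_mem _ _)) x
    simp only [e]
    rw [← List.sum_ofFn]
    congr 1
    rw [List.ofFn_comp' ((a :: b :: l).get) (fun p => N (proj p x)), List.ofFn_get]

lemma sum_map_nonneg {α : Type*} (l : List α) (F : α → ℝ) (h : ∀ p ∈ l, 0 ≤ F p) :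
    0 ≤ (l.map F).sum := by
  apply List.sum_nonneg
  intro a ha
  obtain ⟨p, hp, rfl⟩ := List.mem_map.1 ha
  exact h p hp

lemma sum_map_le {α : Type*} (l : List α) (F G : α → ℝ) (h : ∀ p ∈ l, F p ≤ G p) :
    (l.map F).sum ≤ (l.map G).sum := List.sum_le_sum h

lemma V_nonneg {N : c00 → ℝ} (hN : IsSchlumprechtNorm N) {x : c00} {E : Finset ℕ} {v : ℝ} {s : ℕ} (h : V N x E v s) : 0 ≤ v := by
  induction h with
  | leaf A B E _ _ _ => exact add_nonneg (N_nonneg hN _) (N_nonneg hN _)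
  | node l E h2 _ _ _ ih =>
    have := flog_ge h2
    exact mul_nonneg (by positivity) (sum_map_nonneg _ _ ih)

lemma V_pos {N : c00 → ℝ} {x : c00} {E : Finset ℕ} {v : ℝ} {s : ℕ} (h : V N x E v s) :
    1 ≤ s := by
  cases h <;> omega

lemma V_le_two {N : c00 → ℝ} (hN : IsSchlumprechtNorm N) {x : c00} {E : Finset ℕ} {v : ℝ} {s : ℕ} (h : V N x E v s) :
    v ≤ 2 * N (proj E x) := by
  induction h with
  | leaf A B E _ hA hB =>
    have := N_proj_mono hN hA x
    have := N_proj_mono hN hB x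
    linarith
  | node l E h2 hp _ hE ih =>
    have hf := flog_ge h2
    have h1 := sch_list hN x E (l.map fun p => p.1) (by rwa [List.pairwise_map])
      (by simpa using fun a b c h => hE (a, b, c) h)
    rw [List.length_map, List.map_map] at h1
    have h3 : (l.map fun p => p.2.1).sum ≤ (l.map fun p => 2 * N (proj p.1 x)).sum :=
      sum_map_le _ _ _ ih
    rw [List.sum_map_mul_left] at h3
    rw [inv_mul_le_iff₀ (by linarith)]
    have h4 : (l.map fun p => N (proj p.1 x)).sum ≤ flog l.length * N (proj E x) := h1
    linarith

/-- case analysis data of an item: the list of children -/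
def ChildData (N : c00 → ℝ) (x : c00) (p : Finset ℕ × ℝ × ℕ)
    (q : List (Finset ℕ × ℝ × ℕ)) (L : List (Finset ℕ)) : Prop :=
  (q = [] ∧ L.length = 2 ∧ L.Pairwise FLt ∧ (∀ A ∈ L, A ⊆ p.1) ∧
      p.2.1 = (L.map fun A => N (proj A x)).sum) ∨
  (2 ≤ q.length ∧ q.Pairwise (fun p q => FLt p.1 q.1) ∧ (∀ r ∈ q, V N x r.1 r.2.1 r.2.2) ∧
      (∀ r ∈ q, r.1 ⊆ p.1) ∧ flog q.length * p.2.1 = (q.map fun r => r.2.1).sum ∧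
      p.2.2 = 1 + (q.map fun r => r.2.2).sum ∧ L = [p.1])

lemma exists_child {N : c00 → ℝ} {x : c00} {p : Finset ℕ × ℝ × ℕ}
    (h : V N x p.1 p.2.1 p.2.2) : ∃ q L, ChildData N x p q L := by
  obtain ⟨E, v, s⟩ := p
  change V N x E v s at h
  induction h with
  | leaf A B E h hA hB =>
    refine ⟨[], [A, B], Or.inl ⟨rfl, rfl, by simpa using h, by simp [hA, hB], by simp⟩⟩
  | node l E h2 hp hV hE _ =>
    refine ⟨l, [E], Or.inr ⟨h2, hp, hV, hE, ?_, rfl, rfl⟩⟩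
    have := flog_ge h2
    field_simp

lemma flog_mul_le {n n' R : ℕ} (h : n' ≤ n * 2 ^ R) : flog n' ≤ flog n + R := by
  unfold flog
  have h1 : ((n' : ℝ) + 1) ≤ ((n : ℝ) + 1) * 2 ^ R := by
    have : (n' : ℝ) ≤ n * 2 ^ R := by exact_mod_cast h
    have h2 : (1 : ℝ) ≤ 2 ^ R := one_le_pow₀ (by norm_num)
    nlinarith
  refine (Real.logb_le_logb_of_le (by norm_num) (by positivity) h1).trans ?_
  rw [Real.logb_mul (by positivity) (by positivity), Real.logb_pow]
  simp

lemma flatMap_sum {α β : Type*} (l : List α) (g : α → List β) (F : β → ℝ) :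
    ((l.flatMap g).map F).sum = (l.map fun a => ((g a).map F).sum).sum := by
  induction l with
  | nil => simp
  | cons a l ih => simp [ih]

lemma flatMap_length_le {α β : Type*} (l : List α) (g : α → List β) (M : ℕ)
    (h : ∀ a ∈ l, (g a).length ≤ M) : (l.flatMap g).length ≤ l.length * M := by
  induction l with
  | nil => simp
  | cons a l ih =>
    have h1 := h a (by simp)
    have h2 := ih fun b hb => h b (by simp [hb])
    simp only [List.flatMap_cons, List.length_append, List.length_cons]
    linarith

lemma sum_le_sum_lt {α : Type*} (l : List α) (F G : α → ℕ) (h : ∀ p ∈ l, F p ≤ G p)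
    (h' : ∃ p ∈ l, F p < G p) : (l.map F).sum < (l.map G).sum :=
  List.sum_lt_sum _ _ h h'

lemma weight_ineq {f : ℝ} (s : ℕ) (h : (32 : ℝ) * 2 ^ s ≤ f) :
    64 / f ≤ (f - 1) * (5 / 64 / 4 ^ s) := by
  have h4 : (4 : ℝ) ^ s = 2 ^ s * 2 ^ s := by rw [← mul_pow]; norm_num
  have h1 : (1 : ℝ) ≤ 2 ^ s := one_le_pow₀ (by norm_num)
  have hf : 0 < f := by linarith
  rw [div_le_iff₀ hf, h4]
  set u : ℝ := 2 ^ s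
  rw [show (f - 1) * (5 / 64 / (u * u)) * f = ((f - 1) * f * 5) / (64 * (u * u)) by
    field_simp]
  rw [le_div_iff₀ (by positivity)]
  have : 31 * u ≤ f - 1 := by linarith
  have : 31 * u * (32 * u) ≤ (f - 1) * f := mul_le_mul this h (by positivity) (by linarith)
  nlinarith

/-- pointwise combinatorial bound -/
lemma weight_bound (ℓ M : ℕ) (hℓ : 2 ≤ ℓ) (hM : ℓ < M) (a b : ℝ) (ha : 0 ≤ a) (h2 : a ≤ 2 * b)
    (h3 : flog ℓ * a ≤ (flog ℓ + 64) * b) :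
    a - b ≤ (if ℓ ≤ 2 ^ 32 then (flog ℓ - 1) * a else 0) +
      ∑ s ∈ Finset.range M, (5 / 64 / 4 ^ s) *
        (if ℓ ≤ 2 ^ (64 * 2 ^ s) then (flog ℓ - 1) * a else 0) := by
  have hf := flog_ge hℓ
  have hnn : ∀ s ∈ Finset.range M, 0 ≤ (5 / 64 / 4 ^ s : ℝ) *
        (if ℓ ≤ 2 ^ (64 * 2 ^ s) then (flog ℓ - 1) * a else 0) := by
    intro s _
    apply mul_nonneg (by positivity)
    split_ifs
    · exact mul_nonneg (by linarith) ha
    · exact le_rfl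
  by_cases hc : ℓ ≤ 2 ^ 32
  · rw [if_pos hc]
    have := Finset.sum_nonneg hnn
    nlinarith
  · rw [if_neg hc, zero_add]
    have hex : ∃ s, ℓ ≤ 2 ^ (64 * 2 ^ s) := ⟨ℓ, by
      have h1 : ℓ < 2 ^ ℓ := Nat.lt_two_pow_self
      have h2 : 2 ^ ℓ ≤ 2 ^ (64 * 2 ^ ℓ) := Nat.pow_le_pow_right (by norm_num) (by omega)
      omega⟩
    classical
    set s := Nat.find hex with hs
    have hs1 : ℓ ≤ 2 ^ (64 * 2 ^ s) := Nat.find_spec hex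
    have hsM : s < M := by
      refine lt_of_le_of_lt (Nat.find_min' hex ?_) hM
      have h1 : ℓ < 2 ^ ℓ := Nat.lt_two_pow_self
      have h2 : 2 ^ ℓ ≤ 2 ^ (64 * 2 ^ ℓ) := Nat.pow_le_pow_right (by norm_num) (by omega)
      omega
    have hlow : 2 ^ (32 * 2 ^ s) < ℓ := by
      rcases Nat.eq_zero_or_pos s with h0 | hpos
      · rw [h0]
        simpa using hc
      · have := Nat.find_min hex (m := s - 1) (by omega)
        rw [not_le] at this
        have e : 64 * 2 ^ (s - 1) = 32 * 2 ^ s := by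
          obtain ⟨r, hr⟩ : ∃ r, s = r + 1 := ⟨s - 1, by omega⟩
          rw [hr, Nat.add_sub_cancel, pow_succ]
          ring
        rwa [e] at this
    have hfl : (32 : ℝ) * 2 ^ s ≤ flog ℓ := by
      unfold flog
      rw [Real.le_logb_iff_rpow_le (by norm_num) (by positivity)]
      have : ((2 ^ (32 * 2 ^ s) : ℕ) : ℝ) ≤ ℓ := by exact_mod_cast hlow.le
      have e : (2 : ℝ) ^ ((32 : ℝ) * 2 ^ s) = ((2 ^ (32 * 2 ^ s) : ℕ) : ℝ) := by
        have h := Real.rpow_natCast (2 : ℝ) (32 * 2 ^ s)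
        rw [Nat.cast_pow, Nat.cast_ofNat, ← h, Nat.cast_mul, Nat.cast_pow]
        simp only [Nat.cast_ofNat]
      rw [e]
      linarith
    refine le_trans ?_ (Finset.single_le_sum hnn (Finset.mem_range.2 hsM))
    rw [if_pos hs1]
    have hw := weight_ineq s hfl
    have hfp : 0 < flog ℓ := by linarith
    have hb : 0 ≤ b := by linarith
    have : a - b ≤ 64 / flog ℓ * a := by
      rw [div_mul_eq_mul_div, le_div_iff₀ hfp]
      have : b ≤ a ∨ a < b := le_or_gt b a
      rcases this with h | h
      · nlinarith
      · nlinarith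
    calc a - b ≤ 64 / flog ℓ * a := this
      _ ≤ ((flog ℓ - 1) * (5 / 64 / 4 ^ s)) * a := mul_le_mul_of_nonneg_right hw ha
      _ = _ := by ring

end doubling
end Sch
namespace Sch

section doubling2

lemma list_sum_comm {α : Type*} (l : List α) (M : ℕ) (F : ℕ → α → ℝ) :
    (l.map fun p => ∑ s ∈ Finset.range M, F s p).sum =
      ∑ s ∈ Finset.range M, (l.map (F s)).sum := by
  induction l with
  | nil => simp
  | cons a l ih => simp [ih, Finset.sum_add_distrib]

lemma le_sum_mem {α : Type*} (l : List α) (F : α → ℕ) (p : α) (hp : p ∈ l) :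
    F p ≤ (l.map F).sum := by
  induction l with
  | nil => simp at hp
  | cons a l ih =>
    rcases List.mem_cons.1 hp with rfl | h
    · simp
    · have := ih h
      simp only [List.map_cons, List.sum_cons]
      omega

lemma geom_bound (M : ℕ) : ∑ s ∈ Finset.range M, (5 / 64 / 4 ^ s : ℝ) * (64 * 2 ^ s) ≤ 10 := by
  have h : ∀ M : ℕ, ∑ s ∈ Finset.range M, (5 / 64 / 4 ^ s : ℝ) * (64 * 2 ^ s)
      = 10 - 10 * (1 / 2) ^ M := by
    intro M
    induction M with
    | zero => simp
    | succ M ih =>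
      rw [Finset.sum_range_succ, ih]
      have h4 : (4 : ℝ) ^ M = 2 ^ M * 2 ^ M := by rw [← mul_pow]; norm_num
      rw [h4, pow_succ, one_div_pow]
      field_simp
      ring
  rw [h]
  have : (0 : ℝ) ≤ (1 / 2) ^ M := by positivity
  linarith

lemma doubling {N : c00 → ℝ} (hN : IsSchlumprechtNorm N) (x : c00) (S : ℕ) :
    ∀ (l : List (Finset ℕ × ℝ × ℕ)) (B : Finset ℕ), (l.map fun p => p.2.2).sum = S →
      l.Pairwise (fun p q => FLt p.1 q.1) → (∀ p ∈ l, V N x p.1 p.2.1 p.2.2) →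
      (∀ p ∈ l, p.1 ⊆ B) →
      (l.map fun p => p.2.1).sum ≤ (flog l.length + 64) * N (proj B x) := by
  classical
  induction S using Nat.strong_induction_on with
  | _ S IH =>
  intro l B hS hpw hV hB
  have hW := N_nonneg hN (proj B x)
  set W := N (proj B x) with hWdef
  have hch0 : ∀ p : Finset ℕ × ℝ × ℕ, ∃ q L, p ∈ l → ChildData N x p q L := by
    intro p
    by_cases hp : p ∈ l
    · obtain ⟨q, L, h⟩ := exists_child (hV p hp)
      exact ⟨q, L, fun _ => h⟩
    · exact ⟨[], [], fun h => absurd h hp⟩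
  choose ch L hcd using hch0
  -- collapsing
  have key : ∀ R : ℕ, (l.map fun p => p.2.1).sum ≤ (flog l.length + 64) * W ∨
      (l.map fun p => if 2 ≤ (ch p).length ∧ (ch p).length ≤ 2 ^ R then
        (flog (ch p).length - 1) * p.2.1 else 0).sum ≤ R * W := by
    intro R
    by_cases hex : ∃ p ∈ l, 2 ≤ (ch p).length ∧ (ch p).length ≤ 2 ^ R
    swap
    · right
      have : (l.map fun p => if 2 ≤ (ch p).length ∧ (ch p).length ≤ 2 ^ R then
        (flog (ch p).length - 1) * p.2.1 else 0).sum ≤ (l.map fun p => (0:ℝ)).sum := by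
        apply sum_map_le
        intro p hp
        rw [if_neg fun h => hex ⟨p, hp, h⟩]
      refine this.trans ?_
      simp only [List.map_const', List.sum_replicate, smul_zero]
      positivity
    set g : Finset ℕ × ℝ × ℕ → List (Finset ℕ × ℝ × ℕ) := fun p =>
      if 2 ≤ (ch p).length ∧ (ch p).length ≤ 2 ^ R then ch p else [p] with hg
    -- data of the collapsed children
    have hdat : ∀ p ∈ l, 2 ≤ (ch p).length ∧ (ch p).length ≤ 2 ^ R →
        (ch p).Pairwise (fun p q => FLt p.1 q.1) ∧ (∀ r ∈ ch p, V N x r.1 r.2.1 r.2.2) ∧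
      (∀ r ∈ ch p, r.1 ⊆ p.1) ∧ flog (ch p).length * p.2.1 = ((ch p).map fun r => r.2.1).sum ∧
      p.2.2 = 1 + ((ch p).map fun r => r.2.2).sum := by
      intro p hp hc
      rcases hcd p hp with h | h
      · rw [h.1] at hc; simp at hc
      · exact ⟨h.2.1, h.2.2.1, h.2.2.2.1, h.2.2.2.2.1, h.2.2.2.2.2.1⟩
    have hsub : ∀ p ∈ l, ∀ r ∈ g p, r.1 ⊆ p.1 := by
      intro p hp r hr
      simp only [hg] at hr
      split_ifs at hr with hc
      · exact (hdat p hp hc).2.2.1 r hr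
      · rw [List.mem_singleton.1 hr]
    have hsz : ((l.flatMap g).map fun p => p.2.2).sum < S := by
      have e : ((l.flatMap g).map fun p => p.2.2).sum
          = (l.map fun p => ((g p).map fun p => p.2.2).sum).sum := by
        clear_value g
        clear * -
        induction l with
        | nil => simp
        | cons a l ih => simp [ih]
      rw [e, ← hS]
      apply sum_le_sum_lt
      · intro p hp
        simp only [hg]
        split_ifs with hc
        · have := (hdat p hp hc).2.2.2.2
          omega
        · simp
      · obtain ⟨p, hp, hc⟩ := hex
        refine ⟨p, hp, ?_⟩
        simp only [hg]
        rw [if_pos hc]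
        have := (hdat p hp hc).2.2.2.2
        omega
    have hI := IH _ hsz (l.flatMap g) B rfl (by
        rw [List.pairwise_flatMap]
        constructor
        · intro p hp
          simp only [hg]
          split_ifs with hc
          · exact (hdat p hp hc).1
          · simp
        · refine List.Pairwise.imp_of_mem ?_ hpw
          intro a b ha hb hab r hr r' hr'
          exact FLt.mono hab (hsub a ha r hr) (hsub b hb r' hr')) (by
        intro r hr
        obtain ⟨p, hp, hr⟩ := List.mem_flatMap.1 hr
        simp only [hg] at hr
        split_ifs at hr with hc
        · exact (hdat p hp hc).2.1 r hr
        · rw [List.mem_singleton.1 hr]; exact hV p hp) (by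
        intro r hr
        obtain ⟨p, hp, hr⟩ := List.mem_flatMap.1 hr
        exact (hsub p hp r hr).trans (hB p hp))
    rw [flatMap_sum] at hI
    have hlen : (l.flatMap g).length ≤ l.length * 2 ^ R := by
      apply flatMap_length_le
      intro p hp
      simp only [hg]
      split_ifs with hc
      · exact hc.2
      · simpa using Nat.one_le_two_pow
    have hfl := flog_mul_le hlen
    have hsum : (l.map fun p => ((g p).map fun r => r.2.1).sum).sum =
        (l.map fun p => p.2.1).sum + (l.map fun p => if 2 ≤ (ch p).length ∧
          (ch p).length ≤ 2 ^ R then (flog (ch p).length - 1) * p.2.1 else 0).sum := by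
      rw [← List.sum_map_add]
      congr 1
      apply List.map_congr_left
      intro p hp
      simp only [hg]
      split_ifs with hc
      · rw [← (hdat p hp hc).2.2.2.1]; ring
      · simp
    rw [hsum] at hI
    have h3 : (flog (l.flatMap g).length + 64) * W ≤ (flog l.length + R + 64) * W :=
      mul_le_mul_of_nonneg_right (by linarith) hW
    by_cases h4 : (l.map fun p => if 2 ≤ (ch p).length ∧
          (ch p).length ≤ 2 ^ R then (flog (ch p).length - 1) * p.2.1 else 0).sum ≤ R * W
    · exact Or.inr h4
    · left
      push Not at h4
      nlinarith
  by_contra hcon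
  have key2 := fun R => (key R).resolve_left hcon
  apply hcon
  set M := (l.map fun p => (ch p).length).sum + 1 with hM
  have hML : ∀ p ∈ l, (ch p).length < M := by
    intro p hp
    have := le_sum_mem l (fun p => (ch p).length) p hp
    omega
  -- the leaf list
  have hLsub : ∀ p ∈ l, ∀ A ∈ L p, A ⊆ p.1 := by
    intro p hp A hA
    rcases hcd p hp with h | h
    · exact h.2.2.2.1 A hA
    · rw [h.2.2.2.2.2.2] at hA
      rw [List.mem_singleton.1 hA]
  have hleaf := sch_list hN x B (l.flatMap L) (by
      rw [List.pairwise_flatMap]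
      constructor
      · intro p hp
        rcases hcd p hp with h | h
        · exact h.2.2.1
        · rw [h.2.2.2.2.2.2]; simp
      · refine List.Pairwise.imp_of_mem ?_ hpw
        intro a b ha hb hab r hr r' hr'
        exact FLt.mono hab (hLsub a ha r hr) (hLsub b hb r' hr')) (by
      intro r hr
      obtain ⟨p, hp, hr⟩ := List.mem_flatMap.1 hr
      exact (hLsub p hp r hr).trans (hB p hp))
  rw [flatMap_sum] at hleaf
  have hlen : (l.flatMap L).length ≤ l.length * 2 ^ 1 := by
    apply flatMap_length_le
    intro p hp
    rcases hcd p hp with h | h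
    · rw [h.2.1]; norm_num
    · rw [h.2.2.2.2.2.2]; simp
  have hfl := flog_mul_le hlen
  have hpt : (l.map fun p => p.2.1).sum ≤ (l.map fun p => ((L p).map fun A => N (proj A x)).sum +
      ((if 2 ≤ (ch p).length ∧ (ch p).length ≤ 2 ^ 32 then
        (flog (ch p).length - 1) * p.2.1 else 0) +
      ∑ s ∈ Finset.range M, (5 / 64 / 4 ^ s) *
        (if 2 ≤ (ch p).length ∧ (ch p).length ≤ 2 ^ (64 * 2 ^ s) then
        (flog (ch p).length - 1) * p.2.1 else 0))).sum := by
    apply sum_map_le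
    intro p hp
    rcases hcd p hp with h | h
    · rw [h.1]
      simp [h.2.2.2.2]
    · obtain ⟨h2, hq1, hq2, hq3, hq4, hq5, hq6⟩ := h
      simp only [h2, true_and, hq6, List.map_cons, List.map_nil, List.sum_cons, List.sum_nil,
        add_zero]
      have hv0 := V_nonneg hN (hV p hp)
      have hv2 := V_le_two hN (hV p hp)
      have hlt : ((ch p).map fun r => r.2.2).sum < S := by
        have := le_sum_mem l (fun p => p.2.2) p hp
        omega
      have := IH _ hlt (ch p) p.1 rfl hq1 hq2 hq3
      rw [← hq4] at this
      have := weight_bound (ch p).length M h2 (hML p hp) p.2.1 (N (proj p.1 x)) hv0 hv2 this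
      linarith
  rw [List.sum_map_add, List.sum_map_add, list_sum_comm] at hpt
  simp only [List.sum_map_mul_left] at hpt
  have h32 := key2 32
  have hs : ∑ s ∈ Finset.range M, (5 / 64 / 4 ^ s : ℝ) *
      (l.map fun p => if 2 ≤ (ch p).length ∧ (ch p).length ≤ 2 ^ (64 * 2 ^ s) then
        (flog (ch p).length - 1) * p.2.1 else 0).sum ≤ 10 * W := by
    calc _ ≤ ∑ s ∈ Finset.range M, ((5 / 64 / 4 ^ s : ℝ) * (64 * 2 ^ s)) * W := by
          apply Finset.sum_le_sum
          intro s _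
          have := key2 (64 * 2 ^ s)
          push_cast at this
          rw [mul_assoc]
          exact mul_le_mul_of_nonneg_left this (by positivity)
      _ = (∑ s ∈ Finset.range M, (5 / 64 / 4 ^ s : ℝ) * (64 * 2 ^ s)) * W := by
          rw [Finset.sum_mul]
      _ ≤ 10 * W := mul_le_mul_of_nonneg_right (geom_bound M) hW
  have h5 : flog (l.flatMap L).length * W ≤ (flog l.length + 1) * W :=
    mul_le_mul_of_nonneg_right (by push_cast at hfl; linarith) hW
  push_cast at h32
  nlinarith

end doubling2
end Sch
namespace Sch

/-- the functionals produced by the comparison argument -/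
inductive K (k : ℕ → ℕ) : Finset ℕ → c00 → Prop
  | zero (E : Finset ℕ) : K k E 0
  | single (i : ℕ) (E : Finset ℕ) : i ∈ E → K k E (Finsupp.single i 1)
  | node (n : ℕ) (E : Finset ℕ) (A : Fin n → Finset ℕ) (φ : Fin n → c00) : 2 ≤ n →
      (∀ i j, i < j → FLt (A i) (A j)) → (∀ j, A j ⊆ E) → (∀ j, K k (A j) (φ j)) →
      K k E ((flog n)⁻¹ • ∑ j, φ j)
  | charge (n i : ℕ) (E : Finset ℕ) (A : Fin n → Finset ℕ) (φ : Fin n → c00) : 2 ≤ n →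
      1 ≤ i → i ∈ E → k (i - 1) ≤ n + 1 →
      (∀ i j, i < j → FLt (A i) (A j)) → (∀ j, A j ⊆ E) → (∀ j, ∀ p ∈ A j, i < p) →
      (∀ j, K k (A j) (φ j)) →
      K k E (Finsupp.single i 1 + (flog n)⁻¹ • ∑ j, φ j)

lemma K_supp {k : ℕ → ℕ} {E : Finset ℕ} {φ : c00} (h : K k E φ) (p : ℕ) (hp : p ∉ E) :
    φ p = 0 := by
  induction h with
  | zero E => simp
  | single i E hi =>
    rw [Finsupp.single_apply, if_neg]
    rintro rfl
    exact hp hi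
  | node n E A φ hn hA hE hK ih =>
    have : ∀ j, φ j p = 0 := fun j => ih j fun h => hp (hE j h)
    simp [this]
  | charge n i E A φ hn hi hiE hk hA hE hAi hK ih =>
    have : ∀ j, φ j p = 0 := fun j => ih j fun h => hp (hE j h)
    have hip : i ≠ p := by
      rintro rfl
      exact hp hiE
    simp [this, Finsupp.single_apply, hip]

lemma node_range {k : ℕ → ℕ} {n : ℕ} (hn : 2 ≤ n) (A : Fin n → Finset ℕ) (φ : Fin n → c00)
    (hA : ∀ i j, i < j → FLt (A i) (A j)) (hK : ∀ j, K k (A j) (φ j)) (p : ℕ)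
    (ih : ∀ j, 0 ≤ φ j p ∧ φ j p ≤ 1) :
    0 ≤ ((flog n)⁻¹ • ∑ j, φ j) p ∧ ((flog n)⁻¹ • ∑ j, φ j) p ≤ 1 := by
  have hf := flog_ge hn
  have hs0 : 0 ≤ ∑ j, φ j p := Finset.sum_nonneg fun j _ => (ih j).1
  have hs1 : ∑ j, φ j p ≤ 1 := by
    by_cases hex : ∃ j, p ∈ A j
    · obtain ⟨j, hj⟩ := hex
      rw [Finset.sum_eq_single j]
      · exact (ih j).2
      · intro j' _ hne
        apply K_supp (hK j')
        intro hp
        rcases lt_or_gt_of_ne hne with h | h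
        · exact lt_irrefl _ (hA _ _ h p hp p hj)
        · exact lt_irrefl _ (hA _ _ h p hj p hp)
      · simp
    · push Not at hex
      rw [Finset.sum_eq_zero fun j _ => K_supp (hK j) p (hex j)]
      norm_num
  have e : ((flog n)⁻¹ • ∑ j, φ j) p = (flog n)⁻¹ * ∑ j, φ j p := by
    simp
  rw [e]
  constructor
  · exact mul_nonneg (by positivity) hs0
  · rw [inv_mul_le_iff₀ (by linarith)]
    linarith

lemma K_range {k : ℕ → ℕ} {E : Finset ℕ} {φ : c00} (h : K k E φ) (p : ℕ) :
    0 ≤ φ p ∧ φ p ≤ 1 := by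
  induction h with
  | zero E => simp
  | single i E hi =>
    rw [Finsupp.single_apply]
    split_ifs <;> norm_num
  | node n E A φ hn hA hE hK ih => exact node_range hn A φ hA hK p ih
  | charge n i E A φ hn hi hiE hk hA hE hAi hK ih =>
    by_cases hip : i = p
    · have : ∀ j, φ j p = 0 := fun j => K_supp (hK j) p fun h => by
        have := hAi j p h
        omega
      simp [this, Finsupp.single_apply, hip]
    · rw [Finsupp.add_apply, Finsupp.single_apply, if_neg hip, zero_add]
      exact node_range hn A φ hA hK p ih

lemma K_restrict {k : ℕ → ℕ} {E : Finset ℕ} {φ : c00} (h : K k E φ) (F : Finset ℕ) :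
    K k (E ∩ F) (proj F φ) := by
  induction h with
  | zero E => rw [proj_zero]; exact K.zero _
  | single i E hi =>
    by_cases hF : i ∈ F
    · rw [proj_eq_self]
      · exact K.single _ _ (Finset.mem_inter.2 ⟨hi, hF⟩)
      · intro p hp
        have := Finsupp.support_single_subset hp
        rw [Finset.mem_singleton.1 this]
        exact hF
    · rw [proj_eq_zero]
      · exact K.zero _
      · intro p hp
        have := Finsupp.support_single_subset hp
        rw [Finset.mem_singleton.1 this]
        exact hF
  | node n E A φ hn hA hE hK ih =>
    rw [proj_smul, proj_sum]
    exact K.node n _ (fun j => A j ∩ F) _ hn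
      (fun i j hij => FLt.mono (hA i j hij) Finset.inter_subset_left Finset.inter_subset_left)
      (fun j => Finset.inter_subset_inter_right (hE j)) ih
  | charge n i E A φ hn hi hiE hk hA hE hAi hK ih =>
    rw [proj_add, proj_smul, proj_sum]
    by_cases hF : i ∈ F
    · rw [proj_eq_self (E := F) (x := Finsupp.single i 1)]
      · exact K.charge n i _ (fun j => A j ∩ F) _ hn hi (Finset.mem_inter.2 ⟨hiE, hF⟩) hk
          (fun i j hij => FLt.mono (hA i j hij) Finset.inter_subset_left Finset.inter_subset_left)
          (fun j => Finset.inter_subset_inter_right (hE j))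
          (fun j p hp => hAi j p (Finset.mem_inter.1 hp).1) ih
      · intro p hp
        have := Finsupp.support_single_subset hp
        rw [Finset.mem_singleton.1 this]
        exact hF
    · rw [proj_eq_zero (E := F) (x := Finsupp.single i 1), zero_add]
      · exact K.node n _ (fun j => A j ∩ F) _ hn
          (fun i j hij => FLt.mono (hA i j hij) Finset.inter_subset_left Finset.inter_subset_left)
          (fun j => Finset.inter_subset_inter_right (hE j)) ih
      · intro p hp
        have := Finsupp.support_single_subset hp
        rw [Finset.mem_singleton.1 this]
        exact hF

lemma claimA {N : c00 → ℝ} (hN : IsSchlumprechtNorm N) (k : ℕ → ℕ) (x : c00)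
    (g D : ℕ → ℝ) (hg0 : ∀ i, 0 ≤ g i)
    (hg : ∀ n i : ℕ, 2 ≤ n → 1 ≤ i → k (i - 1) ≤ n + 1 → (flog n)⁻¹ ≤ g i)
    (hD1 : ∀ i, 1 ≤ D i) (hDanti : Antitone D) (hD : ∀ i, (1 + 64 * g i) * D (i + 1) ≤ D i)
    {E : Finset ℕ} {φ : c00} (h : K k E φ) :
    ∀ i0, (∀ p ∈ E, i0 ≤ p) → ∃ v s, V N x E v s ∧
      Finsupp.linearCombination ℝ (fun p => |x p|) φ ≤ D i0 * v := by
  induction h with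
  | zero E =>
    intro i0 _
    refine ⟨_, _, V.leaf ∅ ∅ E (by simp [FLt]) (by simp) (by simp), ?_⟩
    simp [proj_empty, N_zero hN]
  | single i E hi =>
    intro i0 _
    refine ⟨_, _, V.leaf {i} ∅ E (by simp [FLt]) (by simpa using hi) (by simp), ?_⟩
    rw [proj_empty, N_zero hN, N_proj_singleton hN, add_zero, Finsupp.linearCombination_single,
      one_smul]
    have := hD1 i0
    nlinarith [abs_nonneg (x i)]
  | node n E A φ hn hA hE hK ih =>
    intro i0 h0
    have : ∀ j, ∃ v s, V N x (A j) v s ∧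
      Finsupp.linearCombination ℝ (fun p => |x p|) (φ j) ≤ D i0 * v :=
      fun j => ih j i0 fun p hp => h0 p (hE j hp)
    choose v s hV hle using this
    set l : List (Finset ℕ × ℝ × ℕ) := List.ofFn fun j => (A j, v j, s j) with hl
    have hlen : l.length = n := by simp [hl]
    have hsum : (l.map fun p => p.2.1).sum = ∑ j, v j := by
      rw [hl, List.map_ofFn, List.sum_ofFn]; rfl
    have hnode := V.node (N := N) (x := x) l E (by omega) (by
      rw [hl, List.pairwise_ofFn]
      intro i j hij
      exact hA i j hij) (by
      intro p hp
      obtain ⟨j, rfl⟩ := (List.mem_ofFn' _ _).1 hp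
      exact hV j) (by
      intro p hp
      obtain ⟨j, rfl⟩ := (List.mem_ofFn' _ _).1 hp
      exact hE j)
    refine ⟨_, _, hnode, ?_⟩
    rw [hlen, hsum, map_smul, map_sum, smul_eq_mul]
    have hf := flog_ge hn
    calc (flog n)⁻¹ * ∑ j, Finsupp.linearCombination ℝ (fun p => |x p|) (φ j)
        ≤ (flog n)⁻¹ * ∑ j, D i0 * v j :=
          mul_le_mul_of_nonneg_left (Finset.sum_le_sum fun j _ => hle j) (by positivity)
      _ = D i0 * ((flog n)⁻¹ * ∑ j, v j) := by rw [← Finset.mul_sum]; ring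
  | charge n i E A φ hn hi hiE hk hA hE hAi hK ih =>
    intro i0 h0
    have : ∀ j, ∃ v s, V N x (A j) v s ∧
      Finsupp.linearCombination ℝ (fun p => |x p|) (φ j) ≤ D (i + 1) * v :=
      fun j => ih j (i + 1) fun p hp => hAi j p hp
    choose v s hV hle using this
    set B := E.filter (fun p => i < p) with hB
    set l : List (Finset ℕ × ℝ × ℕ) := List.ofFn fun j => (A j, v j, s j) with hl
    have hlen : l.length = n := by simp [hl]
    have hsum : (l.map fun p => p.2.1).sum = ∑ j, v j := by
      rw [hl, List.map_ofFn, List.sum_ofFn]; rfl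
    have hdb := doubling hN x _ l B rfl (by
      rw [hl, List.pairwise_ofFn]
      intro i j hij
      exact hA i j hij) (by
      intro p hp
      obtain ⟨j, rfl⟩ := (List.mem_ofFn' _ _).1 hp
      exact hV j) (by
      intro p hp
      obtain ⟨j, rfl⟩ := (List.mem_ofFn' _ _).1 hp
      intro q hq
      exact Finset.mem_filter.2 ⟨hE j hq, hAi j q hq⟩)
    rw [hlen, hsum] at hdb
    refine ⟨_, _, V.leaf {i} B E (by
      intro a ha b hb
      rw [Finset.mem_singleton.1 ha]
      exact (Finset.mem_filter.1 hb).2) (by simpa using hiE) (Finset.filter_subset _ _), ?_⟩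
    rw [N_proj_singleton hN, map_add, map_smul, map_sum, smul_eq_mul,
      Finsupp.linearCombination_single, one_smul]
    have hf := flog_ge hn
    have hW := N_nonneg hN (proj B x)
    set W := N (proj B x)
    have hDi := hD1 (i + 1)
    have hgi := hg n i hn hi hk
    have hDD : D i ≤ D i0 := hDanti (h0 i hiE)
    have h1 : (flog n)⁻¹ * ∑ j, Finsupp.linearCombination ℝ (fun p => |x p|) (φ j)
        ≤ D i * W := by
      calc (flog n)⁻¹ * ∑ j, Finsupp.linearCombination ℝ (fun p => |x p|) (φ j)
          ≤ (flog n)⁻¹ * ∑ j, D (i + 1) * v j :=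
            mul_le_mul_of_nonneg_left (Finset.sum_le_sum fun j _ => hle j) (by positivity)
        _ = D (i + 1) * ((flog n)⁻¹ * ∑ j, v j) := by rw [← Finset.mul_sum]; ring
        _ ≤ D (i + 1) * ((flog n)⁻¹ * ((flog n + 64) * W)) := by gcongr
        _ = (1 + 64 * (flog n)⁻¹) * D (i + 1) * W := by field_simp
        _ ≤ (1 + 64 * g i) * D (i + 1) * W := by gcongr
        _ ≤ D i * W := mul_le_mul_of_nonneg_right (hD i) hW
    have h2 : D i * W ≤ D i0 * W := mul_le_mul_of_nonneg_right hDD hW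
    have := hD1 i0
    nlinarith [abs_nonneg (x i)]

lemma claimA' {N : c00 → ℝ} (hN : IsSchlumprechtNorm N) (k : ℕ → ℕ)
    (g : ℕ → ℝ) (hg0 : ∀ i, 0 ≤ g i) (hgs : Summable g)
    (hg : ∀ n i : ℕ, 2 ≤ n → 1 ≤ i → k (i - 1) ≤ n + 1 → (flog n)⁻¹ ≤ g i) :
    ∃ C : ℝ, 0 ≤ C ∧ ∀ (x : c00) (E : Finset ℕ) (φ : c00), K k E φ →
      Finsupp.linearCombination ℝ (fun p => |x p|) φ ≤ C * N x := by
  set D : ℕ → ℝ := fun i => Real.exp (64 * (∑' j, g j - ∑ j ∈ Finset.range i, g j)) with hD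
  have hDd : ∀ i, (1 + 64 * g i) * D (i + 1) ≤ D i := by
    intro i
    have h1 : 1 + 64 * g i ≤ Real.exp (64 * g i) := by
      have := Real.add_one_le_exp (64 * g i)
      linarith
    have h2 : D i = Real.exp (64 * g i) * D (i + 1) := by
      simp only [hD]
      rw [← Real.exp_add, Finset.sum_range_succ]
      congr 1
      ring
    rw [h2]
    exact mul_le_mul_of_nonneg_right h1 (Real.exp_pos _).le
  have hDanti : Antitone D := by
    apply antitone_nat_of_succ_le
    intro i
    have := hDd i
    have := mul_nonneg (hg0 i) (Real.exp_pos (64 * (∑' j, g j - ∑ j ∈ Finset.range (i+1), g j))).le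
    simp only [hD] at *
    nlinarith
  have hD1 : ∀ i, 1 ≤ D i := by
    intro i
    apply Real.one_le_exp
    have := hgs.sum_le_tsum (Finset.range i) (fun j _ => hg0 j)
    linarith
  refine ⟨D 0 * 2, by have := hD1 0; linarith, ?_⟩
  intro x E φ h
  obtain ⟨v, s, hV, hle⟩ := claimA hN k x g D hg0 hg hD1 hDanti hDd h 0 (fun _ _ => Nat.zero_le _)
  have h1 := V_le_two hN hV
  have h2 := N_proj_le hN E x
  refine hle.trans ?_
  rw [mul_assoc]
  exact mul_le_mul_of_nonneg_left (by linarith) (by have := hD1 0; linarith)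

end Sch
namespace Sch

lemma ind_sum {n : ℕ} (P : Fin n → Prop) (Q : Prop) [DecidablePred P] [Decidable Q]
    (h1 : ∀ i j, i < j → P i → P j → False)
    (h2 : ∀ j, P j → Q) :
    ∑ j, (if P j then (1 : ℝ) else 0) ≤ if Q then 1 else 0 := by
  by_cases hex : ∃ j, P j
  · obtain ⟨j, hj⟩ := hex
    rw [if_pos (h2 j hj), Finset.sum_eq_single j]
    · rw [if_pos hj]
    · intro j' _ hne
      rw [if_neg]
      intro hj'
      rcases lt_or_gt_of_ne hne with h | h
      · exact h1 _ _ h hj' hj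
      · exact h1 _ _ h hj hj'
    · simp
  · push Not at hex
    rw [Finset.sum_eq_zero fun j _ => if_neg (hex j)]
    split_ifs <;> norm_num

lemma N_proj_l1 {N : c00 → ℝ} (hN : IsSchlumprechtNorm N) (R : Finset ℕ) (z : c00) :
    N (proj R z) ≤ ∑ p ∈ z.support, (if p ∈ R then |z p| else 0) := by
  have e : proj R z = ∑ p ∈ z.support, Finsupp.single p (if p ∈ R then z p else 0) := by
    ext q
    rw [proj_apply, Finsupp.finsetSum_apply]
    by_cases hq : q ∈ z.support
    · rw [Finset.sum_eq_single q]
      · simp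
      · intro b _ hb
        rw [Finsupp.single_apply, if_neg hb]
      · intro h; exact absurd hq h
    · rw [Finset.sum_eq_zero]
      · rw [Finsupp.notMem_support_iff.1 hq]; simp
      · intro b hb
        rw [Finsupp.single_apply, if_neg]
        rintro rfl
        exact hq hb
  rw [e]
  refine (N_sum hN _ _).trans (Finset.sum_le_sum fun p _ => ?_)
  rw [N_single hN]
  split_ifs <;> simp

lemma sum_l1 {N : c00 → ℝ} (hN : IsSchlumprechtNorm N) {n : ℕ} (R : Fin n → Finset ℕ)
    (hR : ∀ i j, i < j → FLt (R i) (R j)) (z : c00) :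
    ∑ j, N (proj (R j) z) ≤ ∑ p ∈ z.support, |z p| := by
  calc ∑ j, N (proj (R j) z)
      ≤ ∑ j, ∑ p ∈ z.support, (if p ∈ R j then |z p| else 0) :=
        Finset.sum_le_sum fun j _ => N_proj_l1 hN _ _
    _ = ∑ p ∈ z.support, ∑ j, (if p ∈ R j then |z p| else 0) := Finset.sum_comm
    _ ≤ ∑ p ∈ z.support, |z p| := by
        apply Finset.sum_le_sum
        intro p _
        have h := ind_sum (fun j => p ∈ R j) True
          (fun i j hij hi hj => lt_irrefl _ (hR i j hij p hi p hj)) (fun _ _ => trivial)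
        rw [if_pos trivial] at h
        have e : ∑ j, (if p ∈ R j then |z p| else 0) =
            |z p| * ∑ j, (if p ∈ R j then (1 : ℝ) else 0) := by
          rw [Finset.mul_sum]
          apply Finset.sum_congr rfl
          intro j _
          split_ifs <;> simp
        rw [e]
        refine mul_le_of_le_one_right (abs_nonneg _) h

/-- `y i` meets `R` -/
def seen (y : ℕ → c00) (R : Finset ℕ) (i : ℕ) : Prop := ∃ p ∈ (y i).support, p ∈ R

def lo (y : ℕ → c00) (R : Finset ℕ) (i : ℕ) : Prop := ∃ i', 1 ≤ i' ∧ i' < i ∧ seen y R i'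

def hi (y : ℕ → c00) (m : ℕ) (R : Finset ℕ) (i : ℕ) : Prop := ∃ i', i < i' ∧ i' ≤ m ∧ seen y R i'

open Classical in
noncomputable def cc (y : ℕ → c00) (m : ℕ) (R : Finset ℕ) (i : ℕ) : ℝ :=
  4 * ((if seen y R i ∧ lo y R i then 1 else 0) + (if seen y R i ∧ hi y m R i then 1 else 0))

lemma cc_nonneg (y : ℕ → c00) (m : ℕ) (R : Finset ℕ) (i : ℕ) : 0 ≤ cc y m R i := by
  unfold cc
  split_ifs <;> norm_num

lemma cc_le (y : ℕ → c00) (m : ℕ) (R : Finset ℕ) (i : ℕ) : cc y m R i ≤ 8 := by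
  unfold cc
  split_ifs <;> norm_num

lemma seen_mono {y : ℕ → c00} {R R' : Finset ℕ} (h : R ⊆ R') {i : ℕ} (hs : seen y R i) :
    seen y R' i := by
  obtain ⟨p, hp, hpR⟩ := hs
  exact ⟨p, hp, h hpR⟩

lemma not_seen {y : ℕ → c00} {R : Finset ℕ} {i : ℕ} (h : ¬ seen y R i) : proj R (y i) = 0 :=
  proj_eq_zero fun p hp hpR => h ⟨p, hp, hpR⟩

lemma cc_sum {y : ℕ → c00} (m : ℕ)
    (hO : ∀ i i', 1 ≤ i → i < i' → ∀ p ∈ (y i).support, ∀ q ∈ (y i').support, p < q)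
    {n : ℕ} (Rj : Fin n → Finset ℕ) (R : Finset ℕ) (hsub : ∀ j, Rj j ⊆ R)
    (hR : ∀ i j, i < j → FLt (Rj i) (Rj j)) (i : ℕ) (hi1 : 1 ≤ i) :
    ∑ j, cc y m (Rj j) i ≤ cc y m R i := by
  classical
  unfold cc
  rw [← Finset.mul_sum, Finset.sum_add_distrib]
  apply mul_le_mul_of_nonneg_left _ (by norm_num)
  apply add_le_add
  · apply ind_sum
    · rintro j j' hjj ⟨⟨p, hp, hpR⟩, _⟩ ⟨_, ⟨i', h1, hlt, q, hq, hqR⟩⟩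
      have a1 := hR j j' hjj p hpR q hqR
      have a2 := hO i' i h1 hlt q hq p hp
      omega
    · rintro j ⟨h1, i', h2, h3, h4⟩
      exact ⟨seen_mono (hsub j) h1, i', h2, h3, seen_mono (hsub j) h4⟩
  · apply ind_sum
    · rintro j j' hjj ⟨_, ⟨i', hlt, h1, q, hq, hqR⟩⟩ ⟨⟨p, hp, hpR⟩, _⟩
      have a1 := hR j j' hjj q hqR p hpR
      have a2 := hO i i' hi1 hlt p hp q hq
      omega
    · rintro j ⟨h1, i', h2, h3, h4⟩
      exact ⟨seen_mono (hsub j) h1, i', h2, h3, seen_mono (hsub j) h4⟩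

/-- using hypothesis (1) with the two complements added -/
lemma complement {N : c00 → ℝ} (hN : IsSchlumprechtNorm N) (z : c00) (e : ℝ) (hz : N z = 1)
    {n : ℕ} (h : ∀ E : Fin (n + 2) → Finset ℕ, (∀ i j, i < j → FLt (E i) (E j)) →
      ∑ i, N (proj (E i) z) ≤ 1 + e) (a b : ℕ) (Rj : Fin n → Finset ℕ)
    (hsub : ∀ j, Rj j ⊆ Finset.Ico a b) (hR : ∀ i j, i < j → FLt (Rj i) (Rj j)) :
    ∑ j, N (proj (Rj j) z) ≤ N (proj (Finset.Ico a b) z) + e := by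
  classical
  by_cases hab : a ≤ b
  swap
  · have : ∀ j, proj (Rj j) z = 0 := by
      intro j
      apply proj_eq_zero
      intro p _ hp
      have := Finset.mem_Ico.1 (hsub j hp)
      omega
    have h0 := h (fun i => if i = 0 then z.support else ∅) (by
      intro i j hij p _ q hq
      have : j ≠ 0 := by rintro rfl; exact absurd hij (by simp)
      simp [this] at hq)
    rw [Fin.sum_univ_succ] at h0
    simp only [if_true, proj_eq_self (Finset.Subset.refl _), hz] at h0
    have h1 : 0 ≤ ∑ i : Fin (n+1), N (proj (if i.succ = 0 then z.support else ∅) z) :=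
      Finset.sum_nonneg fun _ _ => N_nonneg hN _
    have h2 := N_nonneg hN (proj (Finset.Ico a b) z)
    simp only [this, N_zero hN, Finset.sum_const_zero]
    linarith
  set A := z.support.filter (· < a) with hA
  set B := z.support.filter (fun p => b ≤ p) with hB
  set E : Fin (n + 2) → Finset ℕ := Fin.cons A (Fin.snoc (α := fun _ => Finset ℕ) Rj B) with hE
  have hs := h E (by
    intro i j hij
    induction i using Fin.cases with
    | zero =>
      induction j using Fin.cases with
      | zero => exact absurd hij (by simp)
      | succ j =>
        induction j using Fin.lastCases with
        | last =>
          simp only [hE, Fin.cons_zero, Fin.cons_succ, Fin.snoc_last]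
          intro p hp q hq
          have := (Finset.mem_filter.1 hp).2
          have := (Finset.mem_filter.1 hq).2
          omega
        | cast j =>
          simp only [hE, Fin.cons_zero, Fin.cons_succ, Fin.snoc_castSucc]
          intro p hp q hq
          have := (Finset.mem_filter.1 hp).2
          have := Finset.mem_Ico.1 (hsub j hq)
          omega
    | succ i =>
      induction j using Fin.cases with
      | zero => exact absurd hij (by simp)
      | succ j =>
        rw [Fin.succ_lt_succ_iff] at hij
        induction j using Fin.lastCases with
        | last =>
          induction i using Fin.lastCases with
          | last => exact absurd hij (lt_irrefl _)
          | cast i =>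
            simp only [hE, Fin.cons_succ, Fin.snoc_last, Fin.snoc_castSucc]
            intro p hp q hq
            have := (Finset.mem_filter.1 hq).2
            have := Finset.mem_Ico.1 (hsub i hp)
            omega
        | cast j =>
          induction i using Fin.lastCases with
          | last => exact absurd hij (not_lt.2 (Fin.le_last _))
          | cast i =>
            simp only [hE, Fin.cons_succ, Fin.snoc_castSucc]
            exact hR i j (by simpa using hij))
  rw [Fin.sum_univ_succ, Fin.sum_univ_castSucc] at hs
  simp only [hE, Fin.cons_zero, Fin.cons_succ, Fin.snoc_castSucc, Fin.snoc_last] at hs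
  have hdec : z = proj A z + proj (Finset.Ico a b) z + proj B z := by
    ext p
    simp only [Finsupp.add_apply, proj_apply, hA, hB, Finset.mem_filter, Finset.mem_Ico,
      Finsupp.mem_support_iff]
    by_cases hp : z p = 0
    · simp [hp]
    · rcases lt_or_ge p a with h1 | h1
      · simp [hp, h1, not_le.2 h1, show ¬ b ≤ p by omega]
      · rcases lt_or_ge p b with h2 | h2
        · simp [h1, h2, not_lt.2 h1, not_le.2 h2]
        · simp [hp, h1, h2, not_lt.2 h1, not_lt.2 h2]
  have h3 := N_add hN (proj A z + proj (Finset.Ico a b) z) (proj B z)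
  have h4 := N_add hN (proj A z) (proj (Finset.Ico a b) z)
  rw [← hdec, hz] at h3
  linarith

end Sch
namespace Sch

lemma coord_step {N : c00 → ℝ} (hN : IsSchlumprechtNorm N) (y : ℕ → c00)
    (hO : ∀ i i', 1 ≤ i → i < i' → ∀ p ∈ (y i).support, ∀ q ∈ (y i').support, p < q)
    (hnorm : ∀ n, 1 ≤ n → N (y n) = 1)
    (k : ℕ → ℕ) (hk : StrictMono k) (ε η : ℕ → ℝ) (hεη : ∀ i, 1 ≤ i → ε i ≤ η i)
    (hη : ∀ i, 0 ≤ η i)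
    (h1 : ∀ n, 1 ≤ n → ∀ m : ℕ, 1 ≤ m → m ≤ k (n - 1) →
      ∀ E : Fin m → Finset ℕ, (∀ i j : Fin m, i < j → FLt (E i) (E j)) →
        ∑ i, N (proj (E i) (y n)) ≤ 1 + ε n)
    (hl : ∀ i n : ℕ, 1 ≤ i → 2 ≤ n → k i ≤ n + 1 → ∑ p ∈ (y i).support, |y i p| ≤ η i * flog n)
    (m : ℕ) {n : ℕ} (hn : 2 ≤ n) (a b : ℕ) (Rj : Fin n → Finset ℕ)
    (hsub : ∀ j, Rj j ⊆ Finset.Ico a b) (hR : ∀ i j, i < j → FLt (Rj i) (Rj j))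
    (φ : Fin n → c00) (hφ : ∀ j, K k (Finset.Icc 1 m) (φ j)) :
    ∃ ψ, K k (Finset.Icc 1 m) ψ ∧ ∀ i ∈ Finset.Icc 1 m,
      (seen y (Finset.Ico a b) i → 4 ≤ cc y m (Finset.Ico a b) i) →
      ∑ j, (φ j i * N (proj (Rj j) (y i)) + cc y m (Rj j) i * η i) ≤
        flog n * (ψ i * N (proj (Finset.Ico a b) (y i)) + cc y m (Finset.Ico a b) i * η i) := by
  classical
  have : Nonempty (Fin n) := ⟨⟨0, by omega⟩⟩
  have hf := flog_ge hn
  -- the argmax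
  have hmax : ∀ i : ℕ, ∃ j0 : Fin n, ∀ j, (if seen y (Rj j) i then φ j i else 0) ≤
      (if seen y (Rj j0) i then φ j0 i else 0) := fun i =>
    Finite.exists_max fun j => if seen y (Rj j) i then φ j i else 0
  choose J hJ using hmax
  -- restricted children above a threshold
  set F : ℕ → Fin n → Finset ℕ := fun i1 j =>
    (Finset.Icc 1 m).filter fun i => i1 < i ∧ J i = j ∧ seen y (Rj j) i with hF
  have hFlt : ∀ i1, ∀ j j', j < j' → FLt (F i1 j) (F i1 j') := by
    intro i1 j j' hjj i hi i' hi'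
    simp only [hF, Finset.mem_filter, Finset.mem_Icc] at hi hi'
    obtain ⟨hi0, _, hiJ, p, hp, hpR⟩ := hi
    obtain ⟨hi0', _, hiJ', q, hq, hqR⟩ := hi'
    have a1 := hR j j' hjj p hpR q hqR
    rcases lt_trichotomy i i' with h | h | h
    · exact h
    · subst h
      exact absurd (hiJ.symm.trans hiJ') hjj.ne
    · have a2 := hO i' i hi0'.1 h q hq p hp
      omega
  have hKF : ∀ i1 j, K k (Finset.Icc 1 m ∩ F i1 j) (proj (F i1 j) (φ j)) := fun i1 j =>
    K_restrict (hφ j) _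
  have hKlt : ∀ i1, ∀ j j', j < j' →
      FLt (Finset.Icc 1 m ∩ F i1 j) (Finset.Icc 1 m ∩ F i1 j') := fun i1 j j' hjj =>
    FLt.mono (hFlt i1 j j' hjj) Finset.inter_subset_right Finset.inter_subset_right
  have hval : ∀ i1 i, i ∈ Finset.Icc 1 m → i1 < i →
      (∑ j, proj (F i1 j) (φ j)) i = if seen y (Rj (J i)) i then φ (J i) i else 0 := by
    intro i1 i hi hlt
    rw [Finsupp.finsetSum_apply, Finset.sum_eq_single (J i)]
    · rw [proj_apply]
      simp only [hF, Finset.mem_filter, hi, hlt, true_and]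
    · intro j _ hj
      rw [proj_apply, if_neg]
      simp only [hF, Finset.mem_filter]
      rintro ⟨_, _, h, _⟩
      exact hj h.symm
    · simp
  have hval0 : ∀ i1 i, i ≤ i1 → (∑ j, proj (F i1 j) (φ j)) i = 0 := by
    intro i1 i hle
    rw [Finsupp.finsetSum_apply, Finset.sum_eq_zero]
    intro j _
    rw [proj_apply, if_neg]
    simp only [hF, Finset.mem_filter]
    rintro ⟨_, h, _⟩
    omega
  -- not seen
  have hns : ∀ i ψ0, 0 ≤ ψ0 → ¬ seen y (Finset.Ico a b) i →
      ∑ j, (φ j i * N (proj (Rj j) (y i)) + cc y m (Rj j) i * η i) ≤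
        flog n * (ψ0 * N (proj (Finset.Ico a b) (y i)) + cc y m (Finset.Ico a b) i * η i) := by
    intro i ψ0 hψ hs
    have hsj : ∀ j, ¬ seen y (Rj j) i := fun j h => hs (seen_mono (hsub j) h)
    have e1 : ∀ j, proj (Rj j) (y i) = 0 := fun j => not_seen (hsj j)
    have e2 : ∀ j, cc y m (Rj j) i = 0 := fun j => by simp [cc, hsj j]
    rw [Finset.sum_eq_zero fun j _ => by rw [e1, e2, N_zero hN]; ring]
    have := N_nonneg hN (proj (Finset.Ico a b) (y i))
    have := cc_nonneg y m (Finset.Ico a b) i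
    have := hη i
    positivity
  have hcsum : ∀ i, 1 ≤ i → ∑ j, (φ j i * N (proj (Rj j) (y i)) + cc y m (Rj j) i * η i) ≤
      ∑ j, φ j i * N (proj (Rj j) (y i)) + cc y m (Finset.Ico a b) i * η i := by
    intro i hi
    rw [Finset.sum_add_distrib, ← Finset.sum_mul]
    have := mul_le_mul_of_nonneg_right (cc_sum m hO Rj _ hsub hR i hi) (hη i)
    linarith
  -- large indices
  have hbig : ∀ i ψ0, i ∈ Finset.Icc 1 m → n + 2 ≤ k (i - 1) →
      flog n * ψ0 = (if seen y (Rj (J i)) i then φ (J i) i else 0) →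
      4 ≤ cc y m (Finset.Ico a b) i →
      ∑ j, (φ j i * N (proj (Rj j) (y i)) + cc y m (Rj j) i * η i) ≤
        flog n * (ψ0 * N (proj (Finset.Ico a b) (y i)) + cc y m (Finset.Ico a b) i * η i) := by
    intro i ψ0 hi hki hψ h4
    have hi1 := (Finset.mem_Icc.1 hi).1
    refine (hcsum i hi1).trans ?_
    have hc := complement hN (y i) (ε i) (hnorm i hi1)
      (h1 i hi1 (n + 2) (by omega) hki) a b Rj hsub hR
    set Φ : ℝ := (if seen y (Rj (J i)) i then φ (J i) i else 0) with hΦ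
    have hΦ0 : 0 ≤ Φ := by
      rw [hΦ]; split_ifs
      · exact (K_range (hφ _) i).1
      · exact le_rfl
    have hΦ1 : Φ ≤ 1 := by
      rw [hΦ]; split_ifs
      · exact (K_range (hφ _) i).2
      · norm_num
    have h2 : ∑ j, φ j i * N (proj (Rj j) (y i)) ≤ Φ * ∑ j, N (proj (Rj j) (y i)) := by
      rw [Finset.mul_sum]
      apply Finset.sum_le_sum
      intro j _
      by_cases hs : seen y (Rj j) i
      · have := hJ i j
        rw [if_pos hs] at this
        exact mul_le_mul_of_nonneg_right this (N_nonneg hN _)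
      · rw [not_seen hs, N_zero hN]; simp
    have hA := N_nonneg hN (proj (Finset.Ico a b) (y i))
    set A := N (proj (Finset.Ico a b) (y i))
    set c := cc y m (Finset.Ico a b) i
    have h3 : Φ * ∑ j, N (proj (Rj j) (y i)) ≤ Φ * A + η i := by
      have e1 : Φ * ∑ j, N (proj (Rj j) (y i)) ≤ Φ * (A + η i) :=
        mul_le_mul_of_nonneg_left (by linarith [hεη i hi1]) hΦ0
      have e2 : Φ * η i ≤ 1 * η i := mul_le_mul_of_nonneg_right hΦ1 (hη i)
      linarith
    have h5 : flog n * (ψ0 * A + c * η i) = Φ * A + flog n * c * η i := by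
      rw [← hψ]; ring
    rw [h5]
    have h6 : (1 + c) * η i ≤ flog n * c * η i :=
      mul_le_mul_of_nonneg_right (by nlinarith) (hη i)
    linarith
  have hone : ∀ i, 1 ≤ i → ∑ j, φ j i * N (proj (Rj j) (y i)) ≤ ∑ j, N (proj (Rj j) (y i)) := by
    intro i _
    apply Finset.sum_le_sum
    intro j _
    exact mul_le_of_le_one_left (N_nonneg hN _) (K_range (hφ j) i).2
  by_cases hex : ((Finset.Icc 1 m).filter fun i => k (i - 1) ≤ n + 1).Nonempty
  · set i1 := ((Finset.Icc 1 m).filter fun i => k (i - 1) ≤ n + 1).max' hex with hi1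
    have hmem := Finset.max'_mem _ hex
    rw [← hi1, Finset.mem_filter] at hmem
    have hgt : ∀ i ∈ Finset.Icc 1 m, i1 < i → n + 2 ≤ k (i - 1) := by
      intro i hi hlt
      by_contra hcon
      have := Finset.le_max' ((Finset.Icc 1 m).filter fun i => k (i - 1) ≤ n + 1) i
        (Finset.mem_filter.2 ⟨hi, by omega⟩)
      omega
    clear_value i1
    have hi11 := (Finset.mem_Icc.1 hmem.1).1
    have hKψ : K k (Finset.Icc 1 m) (Finsupp.single i1 1 +
        (flog n)⁻¹ • ∑ j, proj (F i1 j) (φ j)) :=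
      K.charge n i1 _ (fun j => Finset.Icc 1 m ∩ F i1 j) _ hn hi11 hmem.1 hmem.2 (hKlt i1)
        (fun j => Finset.inter_subset_left) (fun j p hp => by
          have := (Finset.mem_inter.1 hp).2
          simp only [hF, Finset.mem_filter] at this
          exact this.2.1) (hKF i1)
    refine ⟨_, hKψ, ?_⟩
    intro i hi h4
    by_cases hs : seen y (Finset.Ico a b) i
    swap
    · exact hns i _ (K_range hKψ i).1 hs
    have hc4 := h4 hs
    have hii := (Finset.mem_Icc.1 hi).1
    rcases lt_trichotomy i1 i with hlt | heq | hlt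
    · apply hbig i _ hi (hgt i hi hlt) _ hc4
      rw [Finsupp.add_apply, Finsupp.single_apply, if_neg hlt.ne, zero_add, Finsupp.smul_apply,
        hval i1 i hi hlt, smul_eq_mul, ← mul_assoc, mul_inv_cancel₀ (by linarith), one_mul]
    · subst heq
      rw [Finsupp.add_apply, Finsupp.single_apply, if_pos rfl, Finsupp.smul_apply,
        hval0 i1 i1 le_rfl, smul_zero, add_zero]
      refine (hcsum i1 hii).trans ?_
      have e := sch_le hN (proj (Finset.Ico a b) (y i1)) hn Rj hR
      have e2 : ∀ j, proj (Rj j) (proj (Finset.Ico a b) (y i1)) = proj (Rj j) (y i1) :=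
        fun j => proj_proj_of_subset (hsub j) _
      simp only [e2] at e
      have e3 := hone i1 hii
      have e4 : 0 ≤ cc y m (Finset.Ico a b) i1 * η i1 := mul_nonneg (by linarith) (hη i1)
      nlinarith
    · refine (hcsum i hii).trans ?_
      have e1 := hone i hii
      have e2 := sum_l1 hN Rj hR (y i)
      have e3 := hl i n hii hn (by
        have : k i ≤ k (i1 - 1) := hk.monotone (by omega)
        omega)
      have e4 := mul_nonneg (K_range hKψ i).1 (N_nonneg hN (proj (Finset.Ico a b) (y i)))
      set c := cc y m (Finset.Ico a b) i
      have e5 : (flog n + c) * η i ≤ flog n * c * η i :=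
        mul_le_mul_of_nonneg_right (by nlinarith) (hη i)
      rw [mul_add]
      have e6 := mul_nonneg (show 0 ≤ flog n by linarith) e4
      linarith
  · have hgt : ∀ i ∈ Finset.Icc 1 m, n + 2 ≤ k (i - 1) := by
      intro i hi
      by_contra hcon
      exact hex ⟨i, Finset.mem_filter.2 ⟨hi, by omega⟩⟩
    have hKψ : K k (Finset.Icc 1 m) ((flog n)⁻¹ • ∑ j, proj (F 0 j) (φ j)) :=
      K.node n _ (fun j => Finset.Icc 1 m ∩ F 0 j) _ hn (hKlt 0)
        (fun j => Finset.inter_subset_left) (hKF 0)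
    refine ⟨_, hKψ, ?_⟩
    intro i hi h4
    by_cases hs : seen y (Finset.Ico a b) i
    swap
    · exact hns i _ (K_range hKψ i).1 hs
    have hii := (Finset.mem_Icc.1 hi).1
    apply hbig i _ hi (hgt i hi) _ (h4 hs)
    rw [Finsupp.smul_apply, hval 0 i hi (by omega), smul_eq_mul, ← mul_assoc,
      mul_inv_cancel₀ (by linarith), one_mul]

end Sch
namespace Sch

lemma claim1 {N : c00 → ℝ} (hN : IsSchlumprechtNorm N) (y : ℕ → c00)
    (hO : ∀ i i', 1 ≤ i → i < i' → ∀ p ∈ (y i).support, ∀ q ∈ (y i').support, p < q)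
    (hnorm : ∀ n, 1 ≤ n → N (y n) = 1)
    (k : ℕ → ℕ) (hk : StrictMono k) (ε η : ℕ → ℝ) (hεη : ∀ i, 1 ≤ i → ε i ≤ η i)
    (hη : ∀ i, 0 ≤ η i)
    (h1 : ∀ n, 1 ≤ n → ∀ m : ℕ, 1 ≤ m → m ≤ k (n - 1) →
      ∀ E : Fin m → Finset ℕ, (∀ i j : Fin m, i < j → FLt (E i) (E j)) →
        ∑ i, N (proj (E i) (y n)) ≤ 1 + ε n)
    (hl : ∀ i n : ℕ, 1 ≤ i → 2 ≤ n → k i ≤ n + 1 → ∑ p ∈ (y i).support, |y i p| ≤ η i * flog n)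
    (m : ℕ) (α : ℕ → ℝ) (s : ℕ) :
    ∀ a b, (proj (Finset.Ico a b) (∑ i ∈ Finset.Icc 1 m, α i • y i)).support.card = s →
      ∀ t < N (proj (Finset.Ico a b) (∑ i ∈ Finset.Icc 1 m, α i • y i)),
      ∃ φ, K k (Finset.Icc 1 m) φ ∧ t ≤ ∑ i ∈ Finset.Icc 1 m, |α i| *
        (φ i * N (proj (Finset.Ico a b) (y i)) + cc y m (Finset.Ico a b) i * η i) := by
  classical
  induction s using Nat.strong_induction_on with
  | _ s IH =>
  intro a b hs t ht
  set Y := ∑ i ∈ Finset.Icc 1 m, α i • y i with hY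
  have hYR : ∀ R, proj R Y = ∑ i ∈ Finset.Icc 1 m, α i • proj R (y i) := by
    intro R
    rw [hY, proj_sum]
    simp only [proj_smul]
  have hterm : ∀ φ, K k (Finset.Icc 1 m) φ → ∀ i, 0 ≤ |α i| *
        (φ i * N (proj (Finset.Ico a b) (y i)) + cc y m (Finset.Ico a b) i * η i) := by
    intro φ hφ i
    have h1 := (K_range hφ i).1
    have h2 := N_nonneg hN (proj (Finset.Ico a b) (y i))
    have h3 := cc_nonneg y m (Finset.Ico a b) i
    have h4 := hη i
    positivity
  have hsing : ∀ i ∈ Finset.Icc 1 m, t ≤ |α i| * N (proj (Finset.Ico a b) (y i)) →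
      ∃ φ, K k (Finset.Icc 1 m) φ ∧ t ≤ ∑ i ∈ Finset.Icc 1 m, |α i| *
        (φ i * N (proj (Finset.Ico a b) (y i)) + cc y m (Finset.Ico a b) i * η i) := by
    intro i hi hle
    have hK : K k (Finset.Icc 1 m) (Finsupp.single i 1) := K.single i _ hi
    refine ⟨_, hK, ?_⟩
    refine le_trans ?_ (Finset.single_le_sum (fun i' _ => hterm _ hK i') hi)
    rw [Finsupp.single_apply, if_pos rfl, one_mul]
    refine hle.trans (mul_le_mul_of_nonneg_left ?_ (abs_nonneg _))
    have := mul_nonneg (cc_nonneg y m (Finset.Ico a b) i) (hη i)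
    linarith
  rcases lt_or_ge t 0 with ht0 | ht0
  · exact ⟨0, K.zero _, ht0.le.trans (Finset.sum_nonneg fun i _ => hterm 0 (K.zero _) i)⟩
  by_cases htwo : ∃ i ∈ Finset.Icc 1 m, ∃ i' ∈ Finset.Icc 1 m, i < i' ∧
      seen y (Finset.Ico a b) i ∧ seen y (Finset.Ico a b) i'
  swap
  · -- at most one vector is seen
    by_cases hone : ∃ i ∈ Finset.Icc 1 m, seen y (Finset.Ico a b) i
    · obtain ⟨i, hi, hsi⟩ := hone
      have e : proj (Finset.Ico a b) Y = α i • proj (Finset.Ico a b) (y i) := by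
        rw [hYR, Finset.sum_eq_single i]
        · intro i' hi' hne
          rw [not_seen, smul_zero]
          intro hsi'
          apply htwo
          rcases lt_or_gt_of_ne hne with h | h
          · exact ⟨i', hi', i, hi, h, hsi', hsi⟩
          · exact ⟨i, hi, i', hi', h, hsi, hsi'⟩
        · intro h; exact absurd hi h
      rw [e, N_smul hN] at ht
      exact hsing i hi ht.le
    · have e : proj (Finset.Ico a b) Y = 0 := by
        rw [hYR]
        apply Finset.sum_eq_zero
        intro i hi
        rw [not_seen fun h => hone ⟨i, hi, h⟩, smul_zero]
      rw [e, N_zero hN] at ht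
      linarith
  have hc4 : ∀ i ∈ Finset.Icc 1 m, seen y (Finset.Ico a b) i → 4 ≤ cc y m (Finset.Ico a b) i := by
    intro i hi hsi
    obtain ⟨u, hu, w, hw, huw, hsu, hsw⟩ := htwo
    have hu' := Finset.mem_Icc.1 hu
    have hw' := Finset.mem_Icc.1 hw
    have : lo y (Finset.Ico a b) i ∨ Sch.hi y m (Finset.Ico a b) i := by
      rcases lt_or_ge u i with h | h
      · exact Or.inl ⟨u, hu'.1, h, hsu⟩
      · exact Or.inr ⟨w, by omega, hw'.2, hsw⟩
    unfold cc
    rcases this with h | h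
    · rw [if_pos ⟨hsi, h⟩]
      split_ifs <;> norm_num
    · rw [if_pos (⟨hsi, h⟩ : seen y (Finset.Ico a b) i ∧ Sch.hi y m (Finset.Ico a b) i)]
      split_ifs <;> norm_num
  rcases split_interval hN ht0 ht with ⟨p, hp⟩ | ⟨n, hn, a', b', hlt, hcard, hsum⟩
  · have e : (proj (Finset.Ico a b) Y) p =
        ∑ i ∈ Finset.Icc 1 m, α i * (proj (Finset.Ico a b) (y i)) p := by
      rw [hYR, Finsupp.finsetSum_apply]
      simp
    by_cases hex : ∃ i ∈ Finset.Icc 1 m, y i p ≠ 0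
    · obtain ⟨i, hi, hip⟩ := hex
      have e2 : (proj (Finset.Ico a b) Y) p = α i * (proj (Finset.Ico a b) (y i)) p := by
        rw [e, Finset.sum_eq_single i]
        · intro i' hi' hne
          have : y i' p = 0 := by
            by_contra hcon
            have m1 := Finsupp.mem_support_iff.2 hip
            have m2 := Finsupp.mem_support_iff.2 hcon
            rcases lt_or_gt_of_ne hne with h | h
            · exact lt_irrefl _ (hO i' i (Finset.mem_Icc.1 hi').1 h p m2 p m1)
            · exact lt_irrefl _ (hO i i' (Finset.mem_Icc.1 hi).1 h p m1 p m2)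
          rw [proj_apply, this]
          simp
        · intro h; exact absurd hi h
      rw [e2, abs_mul] at hp
      refine hsing i hi (hp.le.trans ?_)
      exact mul_le_mul_of_nonneg_left (coord_le hN _ p) (abs_nonneg _)
    · push Not at hex
      rw [e, Finset.sum_eq_zero] at hp
      · simp at hp; linarith
      · intro i hi
        rw [proj_apply, hex i hi]
        simp
  · -- the splitting case
    set Rj : Fin n → Finset ℕ := fun j => Finset.Ico (max (a' j) a) (min (b' j) b) with hRj
    have hRj' : ∀ j, Rj j = Finset.Ico (a' j) (b' j) ∩ Finset.Ico a b := by
      intro j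
      rw [Finset.Ico_inter_Ico]
    have hsub : ∀ j, Rj j ⊆ Finset.Ico a b := fun j => by
      rw [hRj' j]; exact Finset.inter_subset_right
    have hR : ∀ i j, i < j → FLt (Rj i) (Rj j) := by
      intro i j hij
      rw [hRj' i, hRj' j]
      exact FLt.mono (hlt i j hij) Finset.inter_subset_left Finset.inter_subset_left
    have hpp : ∀ j, proj (Finset.Ico (a' j) (b' j)) (proj (Finset.Ico a b) Y) = proj (Rj j) Y := by
      intro j
      rw [proj_proj, hRj' j]
    simp only [hpp] at hcard hsum
    have hf := flog_ge hn
    set θ : ℝ := (∑ j, N (proj (Rj j) Y) - t * flog n) / n with hθ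
    have hn0 : (0 : ℝ) < n := by exact_mod_cast (by omega : 0 < n)
    have hθ0 : 0 < θ := div_pos (by linarith) hn0
    have hch : ∀ j, ∃ φ, K k (Finset.Icc 1 m) φ ∧ N (proj (Rj j) Y) - θ ≤
        ∑ i ∈ Finset.Icc 1 m, |α i| *
        (φ i * N (proj (Rj j) (y i)) + cc y m (Rj j) i * η i) := by
      intro j
      exact IH _ (by rw [← hs]; exact hcard j) (max (a' j) a) (min (b' j) b) rfl _
        (by change _ < N (proj (Rj j) Y); linarith)
    choose φ hφ hφle using hch
    obtain ⟨ψ, hψ, hle⟩ := coord_step hN y hO hnorm k hk ε η hεη hη h1 hl m hn a b Rj hsub hR φ hφ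
    refine ⟨ψ, hψ, ?_⟩
    have e1 : ∑ j, (N (proj (Rj j) Y) - θ) = t * flog n := by
      rw [Finset.sum_sub_distrib]
      simp only [Finset.sum_const, Finset.card_univ, Fintype.card_fin, nsmul_eq_mul, hθ]
      field_simp
      ring
    have e2 : t * flog n ≤ ∑ j, ∑ i ∈ Finset.Icc 1 m, |α i| *
        (φ j i * N (proj (Rj j) (y i)) + cc y m (Rj j) i * η i) := by
      rw [← e1]
      exact Finset.sum_le_sum fun j _ => hφle j
    rw [Finset.sum_comm] at e2
    have e3 : ∑ i ∈ Finset.Icc 1 m, ∑ j, |α i| *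
        (φ j i * N (proj (Rj j) (y i)) + cc y m (Rj j) i * η i) ≤
        flog n * ∑ i ∈ Finset.Icc 1 m, |α i| *
        (ψ i * N (proj (Finset.Ico a b) (y i)) + cc y m (Finset.Ico a b) i * η i) := by
      rw [Finset.mul_sum]
      apply Finset.sum_le_sum
      intro i hi
      rw [← Finset.mul_sum, mul_left_comm]
      exact mul_le_mul_of_nonneg_left (hle i hi (hc4 i hi)) (abs_nonneg _)
    have e4 := e2.trans e3
    rw [mul_comm] at e4
    exact le_of_mul_le_mul_left e4 (by linarith)

lemma block_order {y : ℕ → c00} (hne : ∀ n, 1 ≤ n → y n ≠ 0)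
    (hblock : ∀ n, 1 ≤ n → ∀ i ∈ (y n).support, ∀ j ∈ (y (n + 1)).support, i < j) :
    ∀ i i', 1 ≤ i → i < i' → ∀ p ∈ (y i).support, ∀ q ∈ (y i').support, p < q := by
  intro i i' hi hlt
  induction i', hlt using Nat.le_induction with
  | base => exact hblock i hi
  | succ j hj ih =>
    intro p hp q hq
    obtain ⟨r, hr⟩ := Finsupp.support_nonempty_iff.2 (hne j (by omega))
    exact (ih p hp r hr).trans (hblock j (by omega) r hr q hq)

end Sch

/-- Theorem 2.4: under conditions (1) and (2) (for all n ≥ 1, with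
`(k_n)_{n≥0}` strictly increasing), the sequence `(y_n)_{n≥1}` is equivalent to
the unit vector basis `(e_n)`. -/
theorem block_sequence_equivalent_to_basis
    (N : c00 → ℝ) (hN : IsSchlumprechtNorm N)
    (ε : ℕ → ℝ) (hεpos : ∀ n, 1 ≤ n → 0 < ε n)
    (hεsum : Summable fun n => ε (n + 1))
    (y : ℕ → c00) (hnorm : ∀ n, 1 ≤ n → N (y n) = 1)
    (hblock : ∀ n, 1 ≤ n → ∀ i ∈ (y n).support, ∀ j ∈ (y (n + 1)).support, i < j)
    (k : ℕ → ℕ) (hk : StrictMono k)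
    (h1 : ∀ n, 1 ≤ n → ∀ m : ℕ, 1 ≤ m → m ≤ k (n - 1) →
      ∀ E : Fin m → Finset ℕ, (∀ i j : Fin m, i < j → FLt (E i) (E j)) →
        ∑ i, N (proj (E i) (y n)) ≤ 1 + ε n)
    (h2 : ∀ n, 1 ≤ n → ∀ i ∈ (y n).support, (i : ℝ) ≤ ε n * flog ((k n : ℝ) / 3)) :
    ∃ C : ℝ, 1 ≤ C ∧ ∀ m : ℕ, ∀ α : ℕ → ℝ,
      (1 / C) * N (∑ i ∈ Finset.Icc 1 m, α i • Finsupp.single i (1 : ℝ)) ≤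
        N (∑ i ∈ Finset.Icc 1 m, α i • y i) ∧
      N (∑ i ∈ Finset.Icc 1 m, α i • y i) ≤
        C * N (∑ i ∈ Finset.Icc 1 m, α i • Finsupp.single i (1 : ℝ)) := by
  classical
  have hne : ∀ n, 1 ≤ n → y n ≠ 0 := by
    intro n hn h0
    have := hnorm n hn
    rw [h0, Sch.N_zero hN] at this
    norm_num at this
  have hO := Sch.block_order hne hblock
  have hex : ∀ n, 1 ≤ n → ∃ p, p ∈ (y n).support := fun n hn =>
    Finsupp.support_nonempty_iff.2 (hne n hn)
  have hpos : ∀ n, 2 ≤ n → ∀ p ∈ (y n).support, 1 ≤ p := by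
    intro n hn p hp
    obtain ⟨q, hq⟩ := hex 1 le_rfl
    have := hO 1 n le_rfl (by omega) q hq p hp
    omega
  have hkpos : ∀ i, 1 ≤ i → 1 ≤ k i := by
    intro i hi
    have : k 0 < k i := hk (by omega)
    omega
  have hflog : ∀ i n : ℕ, k i ≤ n + 1 → 2 ≤ n → flog ((k i : ℝ) / 3) ≤ flog n := by
    intro i n hki hn
    apply Sch.flog_mono (by positivity)
    have h1 : (k i : ℝ) ≤ n + 1 := by exact_mod_cast hki
    have h2 : (2 : ℝ) ≤ n := by exact_mod_cast hn
    linarith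
  have hs2 : Summable fun n => ε (n + 2) := by
    have := (summable_nat_add_iff (f := fun n => ε (n + 1)) 1).2 hεsum
    exact this
  have hF1 : 0 < flog ((k 1 : ℝ) / 3) := by
    apply Sch.flog_pos
    have : (1 : ℝ) ≤ k 1 := by exact_mod_cast hkpos 1 le_rfl
    positivity
  set g : ℕ → ℝ := fun i => if i ≤ 2 then 1 else ε (i - 1) with hg
  have hg0 : ∀ i, 0 ≤ g i := by
    intro i
    simp only [hg]
    split_ifs with h
    · norm_num
    · exact (hεpos _ (by omega)).le
  have hgs : Summable g := by
    rw [← summable_nat_add_iff 3]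
    refine hs2.congr fun n => ?_
    simp only [hg]
    rw [if_neg (by omega)]
    rfl
  have hgf : ∀ n i : ℕ, 2 ≤ n → 1 ≤ i → k (i - 1) ≤ n + 1 → (flog n)⁻¹ ≤ g i := by
    intro n i hn hi hki
    have hf := Sch.flog_ge hn
    simp only [hg]
    split_ifs with h
    · apply inv_le_one_of_one_le₀; linarith
    · obtain ⟨p, hp⟩ := hex (i - 1) (by omega)
      have h3 : (1 : ℝ) ≤ p := by exact_mod_cast hpos (i - 1) (by omega) p hp
      have h4 := h2 (i - 1) (by omega) p hp
      have h5 := hflog (i - 1) n hki hn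
      have h6 := mul_le_mul_of_nonneg_left h5 (hεpos (i - 1) (by omega)).le
      rw [inv_le_iff_one_le_mul₀ (by linarith)]
      linarith
  obtain ⟨CA, hCA0, hCA⟩ := Sch.claimA' hN k g hg0 hgs hgf
  set l1 : ℝ := ∑ p ∈ (y 1).support, |y 1 p| with hl1
  have hl10 : 0 ≤ l1 := Finset.sum_nonneg fun _ _ => abs_nonneg _
  set η : ℕ → ℝ := fun i => if i = 0 then 0 else if i = 1 then
    ε 1 + l1 / flog ((k 1 : ℝ) / 3) else ε i with hη
  have hη1 : η 1 = ε 1 + l1 / flog ((k 1 : ℝ) / 3) := by simp [hη]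
  have hη2 : ∀ i, 2 ≤ i → η i = ε i := by
    intro i hi
    simp only [hη]
    rw [if_neg (by omega), if_neg (by omega)]
  have hdiv : 0 ≤ l1 / flog ((k 1 : ℝ) / 3) := div_nonneg hl10 hF1.le
  have hεη : ∀ i, 1 ≤ i → ε i ≤ η i := by
    intro i hi
    rcases Nat.eq_or_lt_of_le hi with h | h
    · subst h
      rw [hη1]; linarith
    · rw [hη2 i h]
  have hη0 : ∀ i, 0 ≤ η i := by
    intro i
    rcases Nat.eq_zero_or_pos i with h | h
    · simp [hη, h]
    · exact (hεpos i h).le.trans (hεη i h)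
  have hηs : Summable η := by
    rw [← summable_nat_add_iff 2]
    refine hs2.congr fun n => ?_
    rw [hη2 _ (by omega)]
  have hl : ∀ i n : ℕ, 1 ≤ i → 2 ≤ n → k i ≤ n + 1 →
      ∑ p ∈ (y i).support, |y i p| ≤ η i * flog n := by
    intro i n hi hn hki
    have hfl := hflog i n hki hn
    rcases Nat.eq_or_lt_of_le hi with h | h
    · subst h
      rw [hη1]
      have e1 : l1 = l1 / flog ((k 1 : ℝ) / 3) * flog ((k 1 : ℝ) / 3) := by
        field_simp
      have e2 := mul_le_mul_of_nonneg_left hfl hdiv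
      have e3 := mul_nonneg (hεpos 1 le_rfl).le (hF1.le.trans hfl)
      rw [add_mul]
      linarith
    · rw [hη2 i h]
      have hsne := Finsupp.support_nonempty_iff.2 (hne i hi)
      set M := (y i).support.max' hsne with hM
      have hMm : M ∈ (y i).support := Finset.max'_mem _ _
      have hcard : (y i).support.card ≤ M := by
        have : (y i).support ⊆ Finset.Icc 1 M := by
          intro p hp
          exact Finset.mem_Icc.2 ⟨hpos i h p hp, Finset.le_max' _ p hp⟩
        simpa using Finset.card_le_card this
      have hsum : ∑ p ∈ (y i).support, |y i p| ≤ (y i).support.card := by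
        have : ∑ p ∈ (y i).support, |y i p| ≤ ∑ p ∈ (y i).support, (1 : ℝ) := by
          apply Finset.sum_le_sum
          intro p _
          rw [← hnorm i hi]
          exact Sch.coord_le hN _ p
        simpa using this
      have hM2 := h2 i hi M hMm
      have hcard' : ((y i).support.card : ℝ) ≤ M := by exact_mod_cast hcard
      have := mul_le_mul_of_nonneg_left hfl (hεpos i hi).le
      linarith
  set T : ℝ := ∑' i, η i with hT
  have hT0 : 0 ≤ T := tsum_nonneg hη0
  refine ⟨1 + CA + 8 * T, by linarith, ?_⟩
  intro m α
  set x : c00 := ∑ i ∈ Finset.Icc 1 m, α i • Finsupp.single i (1 : ℝ) with hx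
  set Y : c00 := ∑ i ∈ Finset.Icc 1 m, α i • y i with hY
  have hxN := Sch.N_nonneg hN x
  have hxi : ∀ i, x i = if i ∈ Finset.Icc 1 m then α i else 0 := by
    intro i
    rw [hx, Finsupp.finsetSum_apply]
    simp only [Finsupp.smul_apply, Finsupp.single_apply, smul_eq_mul, mul_ite, mul_one, mul_zero]
    rw [Finset.sum_ite_eq' (Finset.Icc 1 m) i α]
  have hlow : N x ≤ N Y := by
    apply Sch.dom hN (fun i => if i ∈ Finset.Icc 1 m then (y i).support else ∅)
    · intro i j hij p hp q hq
      split_ifs at hp hq with h1 h2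
      · exact hO i j (Finset.mem_Icc.1 h1).1 hij p hp q hq
      all_goals simp at hp hq
    · intro i
      rw [hxi i]
      split_ifs with hi
      · have e : proj (y i).support Y = α i • y i := by
          rw [hY, Sch.proj_sum, Finset.sum_eq_single i]
          · rw [Sch.proj_smul, Sch.proj_eq_self (Finset.Subset.refl _)]
          · intro j hj hji
            rw [Sch.proj_smul, Sch.proj_eq_zero, smul_zero]
            intro p hp hp'
            rcases lt_or_gt_of_ne hji with h | h
            · exact lt_irrefl _ (hO j i (Finset.mem_Icc.1 hj).1 h p hp p hp')
            · exact lt_irrefl _ (hO i j (Finset.mem_Icc.1 hi).1 h p hp' p hp)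
          · intro h; exact absurd hi h
        rw [e, Sch.N_smul hN, hnorm i (Finset.mem_Icc.1 hi).1, mul_one]
      · rw [abs_zero]; exact Sch.N_nonneg hN _
  have hup : N Y ≤ (CA + 8 * T) * N x := by
    obtain ⟨b, hb⟩ : ∃ b, Y.support ⊆ Finset.Ico 0 b := by
      refine ⟨Y.support.sup id + 1, fun p hp => ?_⟩
      have : id p ≤ Y.support.sup id := Finset.le_sup hp
      simp only [id] at this
      exact Finset.mem_Ico.2 ⟨Nat.zero_le _, by omega⟩
    apply le_of_forall_lt
    intro t ht
    obtain ⟨t', htt, ht'⟩ := exists_between ht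
    refine lt_of_lt_of_le htt ?_
    obtain ⟨φ, hφ, hle⟩ := Sch.claim1 hN y hO hnorm k hk ε η hεη hη0 h1 hl m α _ 0 b rfl t'
      (by rw [← hY, Sch.proj_eq_self hb]; exact ht')
    refine hle.trans ?_
    have hA := hCA x _ φ hφ
    have hlin : Finsupp.linearCombination ℝ (fun p => |x p|) φ =
        ∑ i ∈ Finset.Icc 1 m, φ i * |x i| := by
      rw [Finsupp.linearCombination_apply, Finsupp.sum_of_support_subset (s := Finset.Icc 1 m)]
      · rfl
      · intro p hp
        by_contra hcon
        exact (Finsupp.mem_support_iff.1 hp) (Sch.K_supp hφ p hcon)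
      · simp
    rw [hlin] at hA
    calc ∑ i ∈ Finset.Icc 1 m, |α i| *
        (φ i * N (proj (Finset.Ico 0 b) (y i)) + Sch.cc y m (Finset.Ico 0 b) i * η i)
        ≤ ∑ i ∈ Finset.Icc 1 m, (φ i * |x i| + 8 * N x * η i) := by
          apply Finset.sum_le_sum
          intro i hi
          have e1 : |x i| = |α i| := by rw [hxi i, if_pos hi]
          have e2 : |α i| ≤ N x := by rw [← e1]; exact Sch.coord_le hN x i
          have e3 : N (proj (Finset.Ico 0 b) (y i)) ≤ 1 := by
            rw [← hnorm i (Finset.mem_Icc.1 hi).1]; exact Sch.N_proj_le hN _ _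
          have e4 := (Sch.K_range hφ i).1
          have e5 : Sch.cc y m (Finset.Ico 0 b) i * η i ≤ 8 * η i :=
            mul_le_mul_of_nonneg_right (Sch.cc_le _ _ _ _) (hη0 i)
          rw [e1, mul_add]
          have e6 : φ i * N (proj (Finset.Ico 0 b) (y i)) ≤ φ i * 1 :=
            mul_le_mul_of_nonneg_left e3 e4
          have e7 : |α i| * (φ i * N (proj (Finset.Ico 0 b) (y i))) ≤ |α i| * (φ i * 1) :=
            mul_le_mul_of_nonneg_left e6 (abs_nonneg _)
          have e8 : |α i| * (Sch.cc y m (Finset.Ico 0 b) i * η i) ≤ N x * (8 * η i) :=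
            mul_le_mul e2 e5 (mul_nonneg (Sch.cc_nonneg _ _ _ _) (hη0 i)) hxN
          linarith
      _ = ∑ i ∈ Finset.Icc 1 m, φ i * |x i| + 8 * N x * ∑ i ∈ Finset.Icc 1 m, η i := by
          rw [Finset.sum_add_distrib, Finset.mul_sum]
      _ ≤ CA * N x + 8 * N x * T := by
          apply add_le_add hA
          exact mul_le_mul_of_nonneg_left (hηs.sum_le_tsum _ fun i _ => hη0 i) (by positivity)
      _ = (CA + 8 * T) * N x := by ring
  constructor
  · rw [one_div, inv_mul_le_iff₀ (by linarith)]
    have hYN := Sch.N_nonneg hN Y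
    nlinarith [mul_nonneg hCA0 hYN, mul_nonneg hT0 hYN]
  · refine hup.trans ?_
    exact mul_le_mul_of_nonneg_right (by linarith) hxN
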